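/- arXiv:1810.09681 — 2 statements merged into one kernel-verified Lean document; each statement's English description precedes it below -/
import Mathlib

section
/- If 0 < p ≤ 0.1689, then for all integers n ≥ 1, T_n(p) < 0.4096, where T_n(p) = √n · Δ_n(p) / ρ(p). -/
/-- The standard normal distribution function Φ. -/
noncomputable def Phi (x : ℝ) : ℝ :=
  (Real.sqrt (2 * Real.pi))⁻¹ * ∫ t in Set.Iio x, Real.exp (-t ^ 2 / 2)

/-- The left-continuous binomial distribution function
`F_{n,p}(x) = Σ_{0 ≤ i < x} C(n,i) p^i q^{n−i}`. -/
noncomputable def binomCDF (n : ℕ) (p x : ℝ) : ℝ :=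
  ∑ i ∈ Finset.range (n + 1),
    if (i : ℝ) < x then (n.choose i : ℝ) * p ^ i * (1 - p) ^ (n - i) else 0

/-- `Δ_n(p) = sup_x |F_{n,p}(x) − Φ((x − np)/√(npq))|`. -/
noncomputable def Delta (n : ℕ) (p : ℝ) : ℝ :=
  ⨆ x : ℝ, |binomCDF n p x - Phi ((x - n * p) / Real.sqrt (n * p * (1 - p)))|

/-- `ρ(p) = (p² + q²)/√(pq)`. -/
noncomputable def rho (p : ℝ) : ℝ :=
  (p ^ 2 + (1 - p) ^ 2) / Real.sqrt (p * (1 - p))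

/-- `T_n(p) = √n · Δ_n(p) / ρ(p)`. -/
noncomputable def T (n : ℕ) (p : ℝ) : ℝ :=
  Real.sqrt n * Delta n p / rho p

open Filter Topology Set MeasureTheory

/-- The standard normal density. -/
noncomputable def gaussDensity (x : ℝ) : ℝ := (√(2 * Real.pi))⁻¹ * Real.exp (-x ^ 2 / 2)

lemma integrable_exp_neg_sq_half : Integrable (fun t : ℝ => Real.exp (-t ^ 2 / 2)) := by
  have := integrable_exp_neg_mul_sq (b := 1 / 2) (by norm_num)
  refine this.congr (Eventually.of_forall fun t => ?_)
  simp only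
  congr 1; ring

lemma integral_exp_neg_sq_half : ∫ t : ℝ, Real.exp (-t ^ 2 / 2) = √(2 * Real.pi) := by
  have := integral_gaussian (1 / 2)
  rw [show Real.pi / (1 / 2) = 2 * Real.pi by ring] at this
  rw [← this]
  congr 1; ext t; congr 1; ring

lemma sqrt_two_pi_pos : 0 < √(2 * Real.pi) := Real.sqrt_pos.2 (by positivity)

lemma Phi_eq_integral_Iic (x : ℝ) :
    Phi x = (√(2 * Real.pi))⁻¹ * ∫ t in Iic x, Real.exp (-t ^ 2 / 2) := by
  rw [Phi, integral_Iic_eq_integral_Iio]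

lemma Phi_sub (a b : ℝ) : Phi b - Phi a = ∫ t in a..b, gaussDensity t := by
  rw [Phi_eq_integral_Iic, Phi_eq_integral_Iic, ← mul_sub,
    intervalIntegral.integral_Iic_sub_Iic integrable_exp_neg_sq_half.integrableOn
      integrable_exp_neg_sq_half.integrableOn]
  simp only [gaussDensity, intervalIntegral.integral_const_mul]

lemma gaussDensity_continuous : Continuous gaussDensity := by
  unfold gaussDensity; fun_prop

lemma gaussDensity_pos (x : ℝ) : 0 < gaussDensity x :=
  mul_pos (inv_pos.2 sqrt_two_pi_pos) (Real.exp_pos _)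

lemma gaussDensity_eq (x : ℝ) : gaussDensity x = gaussDensity 0 * Real.exp (-x ^ 2 / 2) := by
  simp [gaussDensity]

lemma gaussDensity_le {x y : ℝ} (h : x ^ 2 ≤ y ^ 2) : gaussDensity y ≤ gaussDensity x := by
  unfold gaussDensity
  have := sqrt_two_pi_pos
  gcongr

lemma hasDerivAt_Phi (x : ℝ) : HasDerivAt Phi (gaussDensity x) x := by
  have h : Phi = fun y => Phi 0 + ∫ t in (0 : ℝ)..y, gaussDensity t := by
    ext y; rw [← Phi_sub]; ring
  rw [h]
  exact (intervalIntegral.integral_hasDerivAt_right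
    (gaussDensity_continuous.intervalIntegrable _ _)
    (gaussDensity_continuous.stronglyMeasurableAtFilter _ _)
    gaussDensity_continuous.continuousAt).const_add _

lemma continuous_Phi : Continuous Phi :=
  continuous_iff_continuousAt.2 fun x => (hasDerivAt_Phi x).continuousAt

lemma Phi_sub_le_of_density_le {a b m : ℝ} (hab : a ≤ b)
    (h : ∀ t ∈ Icc a b, gaussDensity t ≤ m) : Phi b - Phi a ≤ m * (b - a) := by
  rw [Phi_sub]
  have := intervalIntegral.integral_mono_on (μ := volume) hab
    (gaussDensity_continuous.intervalIntegrable _ _)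
    (intervalIntegrable_const (c := m)) h
  simpa [mul_comm] using this

lemma Phi_mono : Monotone Phi :=
  monotone_of_deriv_nonneg (fun x => (hasDerivAt_Phi x).differentiableAt)
    fun x => by rw [(hasDerivAt_Phi x).deriv]; exact (gaussDensity_pos x).le

lemma Phi_neg (x : ℝ) : Phi (-x) = 1 - Phi x := by
  have h1 : Phi (-x) = (√(2 * Real.pi))⁻¹ * ∫ t in Ioi x, Real.exp (-t ^ 2 / 2) := by
    rw [Phi_eq_integral_Iic]
    have := integral_comp_neg_Iic (-x) (fun t => Real.exp (-t ^ 2 / 2))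
    simp only [neg_neg, even_two, Even.neg_pow] at this
    rw [this]
  have h2 := intervalIntegral.integral_Iic_add_Ioi (μ := volume) (b := x)
    (f := fun t => Real.exp (-t ^ 2 / 2))
    integrable_exp_neg_sq_half.integrableOn integrable_exp_neg_sq_half.integrableOn
  rw [integral_exp_neg_sq_half] at h2
  rw [h1, Phi_eq_integral_Iic, eq_sub_iff_add_eq, ← mul_add, add_comm, h2,
    inv_mul_cancel₀ sqrt_two_pi_pos.ne']

lemma Phi_zero : Phi 0 = 1 / 2 := by
  have := Phi_neg 0
  rw [neg_zero] at this; linarith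

lemma Phi_nonneg (x : ℝ) : 0 ≤ Phi x := by
  unfold Phi
  exact mul_nonneg (inv_nonneg.2 sqrt_two_pi_pos.le)
    (setIntegral_nonneg measurableSet_Iio fun t _ => (Real.exp_pos _).le)

lemma Phi_le_one (x : ℝ) : Phi x ≤ 1 := by
  have := Phi_neg x
  linarith [Phi_nonneg (-x)]

lemma gaussDensity_zero_bounds : 0.3989 < gaussDensity 0 ∧ gaussDensity 0 < 0.39895 := by
  have h0 : gaussDensity 0 = (√(2 * Real.pi))⁻¹ := by simp [gaussDensity]
  have hp := sqrt_two_pi_pos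
  have hs : √(2 * Real.pi) ^ 2 = 2 * Real.pi := Real.sq_sqrt (by positivity)
  have h1 := Real.pi_gt_d6
  have h2 := Real.pi_lt_d6
  rw [h0]
  constructor
  · rw [lt_inv_comm₀ (by norm_num) hp]
    refine lt_of_pow_lt_pow_left₀ 2 (by norm_num) ?_
    rw [hs]; norm_num; linarith
  · rw [inv_lt_comm₀ hp (by norm_num)]
    refine lt_of_pow_lt_pow_left₀ 2 (by positivity) ?_
    rw [hs]; norm_num; linarith

lemma gaussDensity_le_zero (x : ℝ) : gaussDensity x ≤ gaussDensity 0 :=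
  gaussDensity_le (by rw [zero_pow two_ne_zero]; positivity)

lemma Phi_sub_le {a b : ℝ} (h : a ≤ b) : Phi b - Phi a ≤ gaussDensity 0 * (b - a) :=
  Phi_sub_le_of_density_le h fun t _ => gaussDensity_le_zero t

lemma tendsto_Phi_atBot : Tendsto Phi atBot (𝓝 0) := by
  have h := intervalIntegral_tendsto_integral_Iic (μ := volume) (f := gaussDensity) 0
    (a := fun x : ℝ => x) (l := atBot)
    (integrable_exp_neg_sq_half.const_mul _).integrableOn tendsto_id
  have h0 : ∫ x in Iic 0, gaussDensity x = Phi 0 := by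
    rw [Phi_eq_integral_Iic]; simp only [gaussDensity, integral_const_mul]
  have h2 : Tendsto (fun x => Phi 0 - ∫ t in x..0, gaussDensity t) atBot (𝓝 (Phi 0 - Phi 0)) := by
    rw [← h0]; exact tendsto_const_nhds.sub h
  rw [sub_self] at h2
  refine h2.congr fun x => ?_
  rw [← Phi_sub]; ring

lemma tendsto_Phi_atTop : Tendsto Phi atTop (𝓝 1) := by
  have h := (tendsto_Phi_atBot.comp tendsto_neg_atTop_atBot).const_sub 1
  rw [sub_zero] at h
  refine h.congr fun x => ?_
  simp [Phi_neg]

lemma Phi_neg_le_exp {z : ℝ} (hz : 0 ≤ z) : Phi (-z) ≤ 1 / 2 * Real.exp (-z ^ 2 / 2) := by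
  set f : ℝ → ℝ := fun z => 1 / 2 * Real.exp (-z ^ 2 / 2) - 1 + Phi z with hf
  have hd : ∀ z, HasDerivAt f (Real.exp (-z ^ 2 / 2) * (gaussDensity 0 - z / 2)) z := by
    intro z
    have h1 : HasDerivAt (fun z : ℝ => -z ^ 2 / 2) (-z) z := by
      refine (((hasDerivAt_pow 2 z).fun_neg).div_const 2).congr_deriv ?_
      norm_num; ring
    refine ((((h1.exp).const_mul (1 / 2)).sub_const 1).fun_add (hasDerivAt_Phi z)).congr_deriv ?_
    rw [gaussDensity_eq z]; ring
  have hfc : Continuous f := continuous_iff_continuousAt.2 fun x => (hd x).continuousAt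
  have hpos := gaussDensity_pos 0
  have hmono : MonotoneOn f (Icc 0 (2 * gaussDensity 0)) := by
    refine monotoneOn_of_deriv_nonneg (convex_Icc _ _) hfc.continuousOn
      (fun x _ => (hd x).differentiableAt.differentiableWithinAt) fun x hx => ?_
    rw [interior_Icc] at hx
    rw [(hd x).deriv]
    exact mul_nonneg (Real.exp_pos _).le (by linarith [hx.2])
  have hanti : AntitoneOn f (Ici (2 * gaussDensity 0)) := by
    refine antitoneOn_of_deriv_nonpos (convex_Ici _) hfc.continuousOn
      (fun x _ => (hd x).differentiableAt.differentiableWithinAt) fun x hx => ?_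
    rw [interior_Ici] at hx
    rw [(hd x).deriv]
    exact mul_nonpos_of_nonneg_of_nonpos (Real.exp_pos _).le (by linarith [mem_Ioi.1 hx])
  have h0 : f 0 = 0 := by simp [hf, Phi_zero]; norm_num
  have hlim : Tendsto f atTop (𝓝 (1 / 2 * 0 - 1 + 1)) := by
    refine Tendsto.add (Tendsto.sub_const (Tendsto.const_mul _ ?_) _) tendsto_Phi_atTop
    refine Real.tendsto_exp_atBot.comp ?_
    have h3 : Tendsto (fun x : ℝ => x ^ 2 / 2) atTop atTop :=
      (tendsto_pow_atTop two_ne_zero).atTop_div_const (by norm_num)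
    exact (tendsto_neg_atTop_atBot.comp h3).congr fun x => by simp [neg_div]
  have hfz : 0 ≤ f z := by
    rcases le_total z (2 * gaussDensity 0) with h | h
    · rw [← h0]
      exact hmono ⟨le_rfl, by positivity⟩ ⟨hz, h⟩ hz
    · have := le_of_tendsto hlim (b := f z) (eventually_atTop.2 ⟨z, fun y hy =>
        hanti h (le_trans h hy) hy⟩)
      linarith
  rw [Phi_neg]
  simp only [hf] at hfz
  linarith

lemma monotoneOn_of_hasDerivAt_nonneg {D : Set ℝ} (hD : Convex ℝ D) {F F' : ℝ → ℝ}
    (hF : ∀ x ∈ D, HasDerivAt F (F' x) x) (h : ∀ x ∈ D, 0 ≤ F' x) : MonotoneOn F D :=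
  monotoneOn_of_deriv_nonneg hD (fun x hx => (hF x hx).continuousAt.continuousWithinAt)
    (fun x hx => (hF x (interior_subset hx)).differentiableAt.differentiableWithinAt)
    fun x hx => by rw [(hF x (interior_subset hx)).deriv]; exact h x (interior_subset hx)

/-- The Kullback–Leibler divergence of Bernoulli laws with parameters `w` and `p`. -/
noncomputable def bernKL (w p : ℝ) : ℝ :=
  w * (Real.log w - Real.log p) + (1 - w) * (Real.log (1 - w) - Real.log (1 - p))

lemma bernKL_self (w : ℝ) : bernKL w w = 0 := by simp [bernKL]

lemma bernKL_symm (w p : ℝ) : bernKL (1 - w) (1 - p) = bernKL w p := by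
  simp only [bernKL, sub_sub_cancel]; ring

lemma hasDerivAt_bernKL (w : ℝ) {p : ℝ} (hp : p ∈ Ioo (0 : ℝ) 1) :
    HasDerivAt (bernKL w) ((p - w) / (p * (1 - p))) p := by
  have hp0 : p ≠ 0 := hp.1.ne'
  have hq0 : 1 - p ≠ 0 := (sub_pos.2 hp.2).ne'
  have h1 : HasDerivAt (fun p : ℝ => 1 - p) (-1) p := (hasDerivAt_id p).const_sub 1
  have h := (((Real.hasDerivAt_log hp0).const_sub (Real.log w)).const_mul w).fun_add
    (((h1.log hq0).const_sub (Real.log (1 - w))).const_mul (1 - w))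
  refine h.congr_deriv ?_
  field_simp; ring

lemma bernKL_pos {w p : ℝ} (hw : w ∈ Ioo (0 : ℝ) 1) (hp : p ∈ Ioo (0 : ℝ) 1) (h : p ≠ w) :
    0 < bernKL w p := by
  have hlog : ∀ {a b : ℝ}, 0 < a → 0 < b → b ≠ a → a - b < a * (Real.log a - Real.log b) := by
    intro a b ha hb hab
    have h2 := Real.log_lt_sub_one_of_pos (div_pos hb ha) (by rwa [Ne, div_eq_one_iff_eq ha.ne'])
    rw [Real.log_div hb.ne' ha.ne', lt_sub_iff_add_lt, lt_div_iff₀ ha] at h2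
    linarith
  have h1 := hlog hw.1 hp.1 h
  have h2 := hlog (sub_pos.2 hw.2) (sub_pos.2 hp.2) (fun h' => h (by linarith))
  unfold bernKL; linarith

lemma bernKL_nonneg {w p : ℝ} (hw : w ∈ Ioo (0 : ℝ) 1) (hp : p ∈ Ioo (0 : ℝ) 1) :
    0 ≤ bernKL w p := by
  rcases eq_or_ne p w with rfl | h
  · rw [bernKL_self]
  · exact (bernKL_pos hw hp h).le

lemma hasDerivAt_quad_sub_bernKL (w : ℝ) {p : ℝ} (hp : p ∈ Ioo (0 : ℝ) 1) :
    HasDerivAt (fun p => bernKL w p - (w - p) ^ 2 / (2 * (p * (1 - p))))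
      ((w - p) ^ 2 * (1 - 2 * p) / (2 * (p * (1 - p)) ^ 2)) p := by
  have hp0 : p ≠ 0 := hp.1.ne'
  have hq0 : 1 - p ≠ 0 := (sub_pos.2 hp.2).ne'
  have h1 : HasDerivAt (fun p : ℝ => 1 - p) (-1) p := (hasDerivAt_id p).const_sub 1
  have h2 : HasDerivAt (fun p : ℝ => w - p) (-1) p := (hasDerivAt_id p).const_sub w
  have h3 := (h2.fun_pow 2).fun_div (((hasDerivAt_id p).fun_mul h1).const_mul 2)
    (by simp only [id]; positivity)
  refine ((hasDerivAt_bernKL w hp).fun_sub h3).congr_deriv ?_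
  simp only [id]
  field_simp; ring

lemma bernKL_le_quad {w p : ℝ} (hp : 0 < p) (hw : w ≤ 1 / 2) (h : p ≤ w) :
    bernKL w p ≤ (w - p) ^ 2 / (2 * (p * (1 - p))) := by
  have hm := monotoneOn_of_hasDerivAt_nonneg (convex_Ioc 0 (1 / 2))
    (fun x hx => hasDerivAt_quad_sub_bernKL w (p := x) ⟨hx.1, by linarith [hx.2]⟩)
    (fun x hx => div_nonneg (mul_nonneg (sq_nonneg _) (by linarith [hx.2])) (by positivity))
  have := hm ⟨hp, by linarith⟩ ⟨by linarith, hw⟩ h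
  simp [bernKL_self] at this
  simpa using this

lemma quad_le_bernKL {w p : ℝ} (hw : 0 < w) (hp : p ≤ 1 / 2) (h : w ≤ p) :
    (w - p) ^ 2 / (2 * (p * (1 - p))) ≤ bernKL w p := by
  have hm := monotoneOn_of_hasDerivAt_nonneg (convex_Ioc 0 (1 / 2))
    (fun x hx => hasDerivAt_quad_sub_bernKL w (p := x) ⟨hx.1, by linarith [hx.2]⟩)
    (fun x hx => div_nonneg (mul_nonneg (sq_nonneg _) (by linarith [hx.2])) (by positivity))
  have := hm ⟨hw, by linarith⟩ ⟨by linarith, hp⟩ h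
  simp [bernKL_self] at this
  simpa using this

lemma monotoneOn_cubic_sub_bernKL {w : ℝ} (hw : w ∈ Ioo (0 : ℝ) 1) :
    MonotoneOn (fun p => (w - p) ^ 2 * (2 + w - p) / (2 * ((1 - p) * (w + p))) - bernKL w p)
      (Ioo 0 1) := by
  have hw0 := hw.1
  refine monotoneOn_of_hasDerivAt_nonneg (convex_Ioo 0 1) (F' := fun p => (p - w) ^ 2 *
    (w * (2 - 4 * p + 6 * p ^ 2) + p * (p - w) ^ 2) / (2 * p * (1 - p) ^ 2 * (w + p) ^ 2))
    (fun p hp => ?_) fun p hp => ?_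
  · have hp0 : p ≠ 0 := hp.1.ne'
    have hq0 : 1 - p ≠ 0 := (sub_pos.2 hp.2).ne'
    have hs0 : w + p ≠ 0 := (add_pos hw.1 hp.1).ne'
    have h1 : HasDerivAt (fun p : ℝ => 1 - p) (-1) p := (hasDerivAt_id p).const_sub 1
    have h2 : HasDerivAt (fun p : ℝ => w - p) (-1) p := (hasDerivAt_id p).const_sub w
    have h4 : HasDerivAt (fun p : ℝ => 2 + w - p) (-1) p := (hasDerivAt_id p).const_sub (2 + w)
    have h5 : HasDerivAt (fun p : ℝ => w + p) 1 p := (hasDerivAt_id p).const_add w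
    have h3 := ((h2.fun_pow 2).fun_mul h4).fun_div ((h1.fun_mul h5).const_mul 2)
      (by positivity)
    refine (h3.fun_sub (hasDerivAt_bernKL w hp)).congr_deriv ?_
    field_simp; ring
  · have hp0 : 0 < p := hp.1
    have : 0 < 2 - 4 * p + 6 * p ^ 2 := by nlinarith [sq_nonneg (p - 1 / 3)]
    positivity

lemma cubic_le_bernKL {w p : ℝ} (hw : w < 1) (hp : 0 < p) (h : p ≤ w) :
    (w - p) ^ 2 * (2 + w - p) / (2 * ((1 - p) * (w + p))) ≤ bernKL w p := by
  have := monotoneOn_cubic_sub_bernKL (w := w) ⟨by linarith, hw⟩ ⟨hp, by linarith⟩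
    ⟨by linarith, hw⟩ h
  simp [bernKL_self] at this
  simpa using this

lemma bernKL_le_cubic {w p : ℝ} (hw : 0 < w) (hp : p < 1) (h : w ≤ p) :
    bernKL w p ≤ (w - p) ^ 2 * (2 + w - p) / (2 * ((1 - p) * (w + p))) := by
  have := monotoneOn_cubic_sub_bernKL (w := w) ⟨hw, by linarith⟩ ⟨hw, by linarith⟩
    ⟨by linarith, hp⟩ h
  simp [bernKL_self] at this
  simpa using this

/-- The signed root `g` with `g ^ 2 / 2 = n * bernKL w p` and the sign of `w - p`. -/
noncomputable def signedRoot (n w p : ℝ) : ℝ :=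
  if p ≤ w then √(2 * n * bernKL w p) else -√(2 * n * bernKL w p)

lemma signedRoot_symm (n w p : ℝ) : signedRoot n (1 - w) (1 - p) = -signedRoot n w p := by
  unfold signedRoot
  rw [bernKL_symm]
  rcases lt_trichotomy p w with h | rfl | h
  · rw [if_neg (by linarith), if_pos h.le]
  · simp [bernKL_self]
  · rw [if_pos (by linarith), if_neg (by linarith), neg_neg]

lemma signedRoot_sq {n w p : ℝ} (hn : 0 ≤ n) (hw : w ∈ Ioo (0 : ℝ) 1) (hp : p ∈ Ioo (0 : ℝ) 1) :
    signedRoot n w p ^ 2 = 2 * n * bernKL w p := by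
  have := bernKL_nonneg hw hp
  unfold signedRoot
  split_ifs <;> simp [Real.sq_sqrt (show 0 ≤ 2 * n * bernKL w p by positivity)]

lemma continuousOn_signedRoot {n w : ℝ} : ContinuousOn (signedRoot n w) (Ioo 0 1) := by
  have hc : ContinuousOn (fun p => √(2 * n * bernKL w p)) (Ioo 0 1) := fun p hp =>
    (((hasDerivAt_bernKL w hp).continuousAt.const_mul (2 * n)).sqrt).continuousWithinAt
  unfold signedRoot
  refine ContinuousOn.if (fun a ha => ?_) (hc.mono inter_subset_left)
    (hc.neg.mono inter_subset_left)
  have : a = w := by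
    have := ha.2
    rw [show {a : ℝ | a ≤ w} = Iic w from rfl, frontier_Iic] at this
    exact this
  simp [this, bernKL_self]

/-- The divergence `bernKL w p` as a function of the odds ratio `τ = (1 - w) p / (w (1 - p))`. -/
noncomputable def oddsKL (w τ : ℝ) : ℝ := Real.log (1 - w + w * τ) - w * Real.log τ

lemma one_sub_add_mul_pos {w τ : ℝ} (hw : w ∈ Ioo (0 : ℝ) 1) (hτ : 0 < τ) : 0 < 1 - w + w * τ :=
  add_pos (sub_pos.2 hw.2) (mul_pos hw.1 hτ)

lemma oddsKL_eq_bernKL {w p : ℝ} (hw : w ∈ Ioo (0 : ℝ) 1) (hp : p ∈ Ioo (0 : ℝ) 1) :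
    oddsKL w ((1 - w) * p / (w * (1 - p))) = bernKL w p := by
  have hw0 := hw.1
  have hw1 := sub_pos.2 hw.2
  have hp0 := hp.1
  have hp1 := sub_pos.2 hp.2
  have : 1 - w + w * ((1 - w) * p / (w * (1 - p))) = (1 - w) / (1 - p) := by
    field_simp; ring
  rw [oddsKL, this, bernKL, Real.log_div hw1.ne' hp1.ne', Real.log_div (by positivity)
    (by positivity), Real.log_mul hw1.ne' hp0.ne', Real.log_mul hw0.ne' hp1.ne']
  ring

lemma oddsKL_pos {w τ : ℝ} (hw : w ∈ Ioo (0 : ℝ) 1) (hτ : 0 < τ) (h : τ ≠ 1) :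
    0 < oddsKL w τ := by
  have hw0 := hw.1
  have hw1 := sub_pos.2 hw.2
  have hN := one_sub_add_mul_pos hw hτ
  have hq : 1 - w * τ / (1 - w + w * τ) = (1 - w) / (1 - w + w * τ) := by
    field_simp; ring
  have hp : w * τ / (1 - w + w * τ) ∈ Ioo (0 : ℝ) 1 :=
    ⟨by positivity, by rw [← sub_pos, hq]; positivity⟩
  have h1 := oddsKL_eq_bernKL hw hp
  have h2 : (1 - w) * (w * τ / (1 - w + w * τ)) / (w * (1 - w * τ / (1 - w + w * τ))) = τ := by
    rw [hq]; field_simp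
  rw [h2] at h1
  rw [h1]
  refine bernKL_pos hw hp fun h3 => h ?_
  rw [div_eq_iff hN.ne'] at h3
  have h4 : w * (1 - w) * (τ - 1) = 0 := by linear_combination h3
  rcases mul_eq_zero.1 h4 with h5 | h5
  · exact absurd h5 (by positivity)
  · linarith

lemma oddsKL_one (w : ℝ) : oddsKL w 1 = 0 := by simp [oddsKL]

lemma hasDerivAt_oddsKL {w τ : ℝ} (hw : w ∈ Ioo (0 : ℝ) 1) (hτ : 0 < τ) :
    HasDerivAt (oddsKL w) (w * (1 - w) * (τ - 1) / (τ * (1 - w + w * τ))) τ := by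
  have hN := one_sub_add_mul_pos hw hτ
  have h1 : HasDerivAt (fun τ : ℝ => 1 - w + w * τ) (w * 1) τ :=
    ((hasDerivAt_id τ).const_mul w).const_add (1 - w)
  refine ((h1.log hN.ne').fun_sub ((Real.hasDerivAt_log hτ.ne').const_mul w)).congr_deriv ?_
  field_simp; ring

/-- The linear factor `η + (1 - η) τ`. -/
def linFac (η τ : ℝ) : ℝ := η + (1 - η) * τ

/-- The quadratic `τ - θ (1 - τ) (η + (1 - η) τ)`. -/
def quadFac (θ η τ : ℝ) : ℝ := τ - θ * (1 - τ) * linFac η τ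

/-- The cubic controlling the monotonicity of the ratio of densities. -/
def cubicFac (θ η τ : ℝ) : ℝ :=
  quadFac θ η τ * (2 * θ * linFac η τ - 3 * (1 - η) * τ)
    + τ * linFac η τ * (1 + θ + 2 * θ * (1 - η) * (τ - 1))

/-- The sign condition on `θ`, `η` and `w` which makes the ratio of densities monotone. -/
def RatioCond (θ η w : ℝ) : Prop :=
  ∀ τ, 0 < τ → 0 < quadFac θ η τ →
    0 ≤ (1 - w) * cubicFac θ η τ + w * (τ * (cubicFac θ η τ + linFac η τ * quadFac θ η τ))

lemma linFac_pos {η τ : ℝ} (hη : η ∈ Ioo (0 : ℝ) 1) (hτ : 0 < τ) : 0 < linFac η τ :=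
  add_pos hη.1 (mul_pos (sub_pos.2 hη.2) hτ)

lemma quadFac_pos_of_le {θ η τ τ' : ℝ} (hθ : θ ∈ Ioo (0 : ℝ) 1) (hη : η ∈ Ioo (0 : ℝ) 1)
    (hτ : 0 < τ) (h : 0 < quadFac θ η τ) (hle : τ ≤ τ') : 0 < quadFac θ η τ' := by
  refine h.trans_le ?_
  have h1 : quadFac θ η τ' - quadFac θ η τ
      = (τ' - τ) * ((1 - θ) + 2 * θ * η + θ * (1 - η) * (τ + τ')) := by
    simp only [quadFac, linFac]; ring
  have h2 : 0 < 1 - θ := sub_pos.2 hθ.2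
  have h3 : 0 < 1 - η := sub_pos.2 hη.2
  have h4 := hθ.1
  have h5 := hη.1
  have h6 : 0 ≤ τ' - τ := sub_nonneg.2 hle
  have h7 : 0 < τ' := by linarith
  have : 0 ≤ quadFac θ η τ' - quadFac θ η τ := by rw [h1]; positivity
  linarith

section
variable {θ η w : ℝ} (hθ : θ ∈ Ioo (0 : ℝ) 1) (hη : η ∈ Ioo (0 : ℝ) 1) (hw : w ∈ Ioo (0 : ℝ) 1)
  (hc : RatioCond θ η w)
include hθ hη hw hc

lemma monotoneOn_oddsKL_sub {τ₀ : ℝ} (h0 : 0 < τ₀) (hP : 0 < quadFac θ η τ₀) :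
    MonotoneOn (fun τ => oddsKL w τ - w * (1 - w) * (1 - τ) ^ 2 * linFac η τ /
      (2 * ((1 - w + w * τ) * quadFac θ η τ))) (Ici τ₀) := by
  refine monotoneOn_of_hasDerivAt_nonneg (convex_Ici τ₀) (F' := fun τ => w * (1 - w) *
    (τ - 1) ^ 2 * ((1 - w) * cubicFac θ η τ + w * (τ * (cubicFac θ η τ
      + linFac η τ * quadFac θ η τ))) / (2 * τ * ((1 - w + w * τ) * quadFac θ η τ) ^ 2))
    (fun τ hτ => ?_) fun τ hτ => ?_
  · have hτ0 : 0 < τ := h0.trans_le hτ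
    have hPτ := quadFac_pos_of_le hθ hη h0 hP hτ
    have hN := one_sub_add_mul_pos hw hτ0
    have d1 : HasDerivAt (fun τ : ℝ => 1 - τ) (-1) τ := (hasDerivAt_id τ).const_sub 1
    have d2 : HasDerivAt (fun τ : ℝ => linFac η τ) ((1 - η) * 1) τ :=
      ((hasDerivAt_id τ).const_mul (1 - η)).const_add η
    have d3 : HasDerivAt (fun τ : ℝ => 1 - w + w * τ) (w * 1) τ :=
      ((hasDerivAt_id τ).const_mul w).const_add (1 - w)
    have d4 : HasDerivAt (fun τ : ℝ => quadFac θ η τ) _ τ :=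
      (hasDerivAt_id τ).fun_sub ((d1.const_mul θ).fun_mul d2)
    have d5 := (((d1.fun_pow 2).const_mul (w * (1 - w))).fun_mul d2).fun_div
      ((d3.fun_mul d4).const_mul 2) (by positivity)
    refine ((hasDerivAt_oddsKL hw hτ0).fun_sub d5).congr_deriv ?_
    rw [eq_div_iff (by positivity), sub_mul, div_mul_eq_mul_div, div_mul_eq_mul_div,
      div_sub_div _ _ (by positivity) (by positivity), div_eq_iff (by positivity)]
    simp only [cubicFac, quadFac, linFac]
    push_cast
    ring
  · have hτ0 : 0 < τ := h0.trans_le hτ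
    have hPτ := quadFac_pos_of_le hθ hη h0 hP hτ
    have := hc τ hτ0 hPτ
    have hN := one_sub_add_mul_pos hw hτ0
    have h1 := hw.1
    have h2 := sub_pos.2 hw.2
    positivity

lemma oddsKL_mul_le {τ : ℝ} (h0 : 0 < τ) (h1 : τ < 1) :
    2 * (1 - w + w * τ) * oddsKL w τ * quadFac θ η τ ≤ w * (1 - w) * (1 - τ) ^ 2 * linFac η τ := by
  have hN := one_sub_add_mul_pos hw h0
  have hh := oddsKL_pos hw h0 h1.ne
  have hQ := linFac_pos hη h0
  have hw0 := hw.1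
  have hw1 := sub_pos.2 hw.2
  rcases le_or_gt (quadFac θ η τ) 0 with hP | hP
  · have : 2 * (1 - w + w * τ) * oddsKL w τ * quadFac θ η τ ≤ 0 :=
      mul_nonpos_of_nonneg_of_nonpos (by positivity) hP
    exact this.trans (by positivity)
  · have := monotoneOn_oddsKL_sub hθ hη hw hc h0 hP (mem_Ici.2 le_rfl) (mem_Ici.2 h1.le) h1.le
    simp only [oddsKL_one, sub_self, zero_pow two_ne_zero, mul_zero, zero_mul, zero_div] at this
    rw [sub_nonpos, le_div_iff₀ (by positivity)] at this
    linarith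

lemma le_oddsKL_mul {τ : ℝ} (h1 : 1 < τ) :
    w * (1 - w) * (1 - τ) ^ 2 * linFac η τ ≤ 2 * (1 - w + w * τ) * oddsKL w τ * quadFac θ η τ := by
  have hN := one_sub_add_mul_pos hw (zero_lt_one.trans h1)
  have hP1 : 0 < quadFac θ η 1 := by simp [quadFac]
  have hP := quadFac_pos_of_le hθ hη zero_lt_one hP1 h1.le
  have := monotoneOn_oddsKL_sub hθ hη hw hc zero_lt_one hP1 (mem_Ici.2 le_rfl)
    (mem_Ici.2 h1.le) h1.le
  simp only [oddsKL_one, sub_self, zero_pow two_ne_zero, mul_zero, zero_mul, zero_div] at this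
  rw [sub_nonneg, div_le_iff₀ (by positivity)] at this
  linarith

end

/-- `(1 - τ) ^ 2 / oddsKL w τ`, continued to `τ = 1`. -/
noncomputable def sqDivOddsKL (w : ℝ) : ℝ → ℝ :=
  Function.update (fun τ => (1 - τ) ^ 2 / oddsKL w τ) 1 (2 / (w * (1 - w)))

lemma sqDivOddsKL_of_ne {w τ : ℝ} (h : τ ≠ 1) : sqDivOddsKL w τ = (1 - τ) ^ 2 / oddsKL w τ := by
  simp [sqDivOddsKL, h]

lemma sqDivOddsKL_pos {w τ : ℝ} (hw : w ∈ Ioo (0 : ℝ) 1) (hτ : 0 < τ) : 0 < sqDivOddsKL w τ := by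
  have hw0 := hw.1
  have hw1 := sub_pos.2 hw.2
  rcases eq_or_ne τ 1 with rfl | h
  · simp only [sqDivOddsKL, Function.update_self]; positivity
  · rw [sqDivOddsKL_of_ne h]
    have := oddsKL_pos hw hτ h
    have : 1 - τ ≠ 0 := sub_ne_zero.2 h.symm
    positivity

lemma continuousAt_sqDivOddsKL {w τ : ℝ} (hw : w ∈ Ioo (0 : ℝ) 1) (hτ : 0 < τ) :
    ContinuousAt (sqDivOddsKL w) τ := by
  have hw0 := hw.1
  have hw1 := sub_pos.2 hw.2
  rcases eq_or_ne τ 1 with rfl | h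
  · rw [sqDivOddsKL, continuousAt_update_same]
    have hpos : ∀ᶠ τ : ℝ in 𝓝[≠] 1, 0 < τ :=
      eventually_nhdsWithin_of_eventually_nhds (lt_mem_nhds zero_lt_one)
    have hne : ∀ᶠ τ : ℝ in 𝓝[≠] 1, τ ≠ 1 := eventually_mem_nhdsWithin
    refine HasDerivAt.lhopital_zero_nhdsNE (f' := fun τ => 2 * (1 - τ) ^ 1 * (-1))
      (g' := fun τ => w * (1 - w) * (τ - 1) / (τ * (1 - w + w * τ))) ?_ ?_ ?_ ?_ ?_ ?_
    · exact Eventually.of_forall fun τ => ((hasDerivAt_id τ).const_sub 1).fun_pow 2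
    · exact hpos.mono fun τ hτ => hasDerivAt_oddsKL hw hτ
    · filter_upwards [hpos, hne] with τ h1 h2
      have h3 := one_sub_add_mul_pos hw h1
      have h4 : τ - 1 ≠ 0 := sub_ne_zero.2 h2
      positivity
    · have : ContinuousAt (fun τ : ℝ => (1 - τ) ^ 2) 1 := by fun_prop
      simpa [ContinuousAt] using this.tendsto.mono_left nhdsWithin_le_nhds
    · have := (hasDerivAt_oddsKL hw zero_lt_one).continuousAt
      simpa [ContinuousAt, oddsKL_one] using this.tendsto.mono_left nhdsWithin_le_nhds
    · have h5 : ContinuousAt (fun τ : ℝ => 2 * τ * (1 - w + w * τ) / (w * (1 - w))) 1 := by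
        fun_prop
      have h6 := h5.tendsto.mono_left (nhdsWithin_le_nhds (s := {1}ᶜ))
      have h7 : 2 * 1 * (1 - w + w * 1) / (w * (1 - w)) = 2 / (w * (1 - w)) := by ring
      rw [h7] at h6
      refine h6.congr' ?_
      filter_upwards [hpos, hne] with τ h1 h2
      have h3 := one_sub_add_mul_pos hw h1
      have h4 : τ - 1 ≠ 0 := sub_ne_zero.2 h2
      field_simp
      ring
  · rw [sqDivOddsKL, continuousAt_update_of_ne h]
    exact ContinuousAt.div (by fun_prop) (hasDerivAt_oddsKL hw hτ).continuousAt
      (oddsKL_pos hw hτ h).ne'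

/-- The logarithm of the squared ratio of densities. -/
noncomputable def logRatio (θ η w τ : ℝ) : ℝ :=
  2 * θ * Real.log τ + Real.log (sqDivOddsKL w τ) - 2 * Real.log (linFac η τ)

section
variable {θ η w : ℝ} (hθ : θ ∈ Ioo (0 : ℝ) 1) (hη : η ∈ Ioo (0 : ℝ) 1) (hw : w ∈ Ioo (0 : ℝ) 1)
include hη hw

lemma continuousAt_logRatio {τ : ℝ} (hτ : 0 < τ) : ContinuousAt (logRatio θ η w) τ := by
  have h1 : ContinuousAt (linFac η) τ := by unfold linFac; fun_prop
  exact ((continuousAt_const.mul (Real.continuousAt_log hτ.ne')).add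
    ((continuousAt_sqDivOddsKL hw hτ).log (sqDivOddsKL_pos hw hτ).ne')).sub
    (continuousAt_const.mul (h1.log (linFac_pos hη hτ).ne'))

lemma hasDerivAt_logRatio {τ : ℝ} (hτ : 0 < τ) (h : τ ≠ 1) :
    HasDerivAt (logRatio θ η w) ((2 * (1 - w + w * τ) * oddsKL w τ * quadFac θ η τ
      - w * (1 - w) * (1 - τ) ^ 2 * linFac η τ) /
      (τ * (τ - 1) * linFac η τ * (1 - w + w * τ) * oddsKL w τ)) τ := by
  have hN := one_sub_add_mul_pos hw hτ
  have hh := oddsKL_pos hw hτ h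
  have hQ := linFac_pos hη hτ
  have h1 : 1 - τ ≠ 0 := sub_ne_zero.2 h.symm
  have h1' : τ - 1 ≠ 0 := sub_ne_zero.2 h
  have d1 : HasDerivAt (fun τ : ℝ => 1 - τ) (-1) τ := (hasDerivAt_id τ).const_sub 1
  have d2 : HasDerivAt (fun τ : ℝ => linFac η τ) ((1 - η) * 1) τ :=
    ((hasDerivAt_id τ).const_mul (1 - η)).const_add η
  have d3 := (((Real.hasDerivAt_log hτ.ne').const_mul (2 * θ)).fun_add
    (((d1.log h1).const_mul 2).fun_sub ((hasDerivAt_oddsKL hw hτ).log hh.ne'))).fun_sub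
    ((d2.log hQ.ne').const_mul 2)
  refine (d3.congr_of_eventuallyEq ?_).congr_deriv ?_
  · filter_upwards [lt_mem_nhds hτ, isOpen_ne.mem_nhds h] with x hx hx1
    rw [logRatio, sqDivOddsKL_of_ne hx1, Real.log_div (pow_ne_zero 2 (sub_ne_zero.2 hx1.symm))
      (oddsKL_pos hw hx hx1).ne', Real.log_pow]
    norm_num
  · generalize oddsKL w τ = H at hh ⊢
    have e1 : (-1) / (1 - τ) = 1 / (τ - 1) := by
      rw [div_eq_div_iff h1 h1']; ring
    rw [e1]
    have e2 : quadFac θ η τ = τ - θ * (1 - τ) * linFac η τ := rfl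
    have e3 : τ = linFac η τ * τ - (1 - η) * τ * (τ - 1) := by unfold linFac; ring
    have e4 : quadFac θ η τ =
        linFac η τ * τ - (1 - η) * τ * (τ - 1) - θ * (1 - τ) * linFac η τ := by
      rw [e2, ← e3]
    rw [e4]
    generalize linFac η τ = Q at hQ ⊢
    generalize 1 - w + w * τ = N at hN ⊢
    field_simp
    ring

include hθ in
lemma monotoneOn_logRatio (hc : RatioCond θ η w) : MonotoneOn (logRatio θ η w) (Ioi 0) := by
  have key : ∀ τ : ℝ, 0 < τ → τ ≠ 1 → 0 ≤ deriv (logRatio θ η w) τ := by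
    intro τ hτ h
    have hN := one_sub_add_mul_pos hw hτ
    have hh := oddsKL_pos hw hτ h
    have hQ := linFac_pos hη hτ
    rw [(hasDerivAt_logRatio hη hw hτ h).deriv]
    rcases lt_or_gt_of_ne h with h1 | h1
    · refine div_nonneg_of_nonpos (sub_nonpos.2 (oddsKL_mul_le hθ hη hw hc hτ h1)) ?_
      have : 0 ≤ (1 - τ) * (τ * linFac η τ * (1 - w + w * τ) * oddsKL w τ) :=
        mul_nonneg (by linarith) (by positivity)
      linarith
    · refine div_nonneg (sub_nonneg.2 (le_oddsKL_mul hθ hη hw hc h1)) ?_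
      have : 0 < τ - 1 := sub_pos.2 h1
      positivity
  have m1 : MonotoneOn (logRatio θ η w) (Ioc 0 1) := by
    refine monotoneOn_of_deriv_nonneg (convex_Ioc 0 1)
      (fun x hx => (continuousAt_logRatio hη hw hx.1).continuousWithinAt) (fun x hx => ?_)
      fun x hx => ?_
    all_goals rw [interior_Ioc] at hx
    · exact (hasDerivAt_logRatio hη hw hx.1 hx.2.ne).differentiableAt.differentiableWithinAt
    · exact key x hx.1 hx.2.ne
  have m2 : MonotoneOn (logRatio θ η w) (Ici 1) := by
    refine monotoneOn_of_deriv_nonneg (convex_Ici 1)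
      (fun x hx => (continuousAt_logRatio hη hw (zero_lt_one.trans_le hx)).continuousWithinAt)
      (fun x hx => ?_) fun x hx => ?_
    all_goals rw [interior_Ici] at hx
    · exact (hasDerivAt_logRatio hη hw (zero_lt_one.trans hx)
        (ne_of_gt hx)).differentiableAt.differentiableWithinAt
    · exact key x (zero_lt_one.trans hx) (ne_of_gt hx)
  have := m1.union_right m2 (isGreatest_Ioc zero_lt_one) isLeast_Ici
  rwa [Ioc_union_Ici_eq_Ioi zero_lt_one] at this

end

/-- The binomial probability mass function. -/
noncomputable def binPMF (n : ℕ) (p : ℝ) (k : ℕ) : ℝ := n.choose k * p ^ k * (1 - p) ^ (n - k)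

/-- The probability that a binomial variable is at most `k`. -/
noncomputable def binLE (n : ℕ) (p : ℝ) (k : ℕ) : ℝ := ∑ i ∈ Finset.range (k + 1), binPMF n p i

lemma binPMF_nonneg {n k : ℕ} {p : ℝ} (hp : p ∈ Ioo (0 : ℝ) 1) : 0 ≤ binPMF n p k := by
  have h1 := hp.1
  have h2 := sub_pos.2 hp.2
  unfold binPMF; positivity

lemma hasDerivAt_one_sub (p : ℝ) : HasDerivAt (fun p : ℝ => 1 - p) (-1) p :=
  (hasDerivAt_id p).const_sub 1

lemma hasDerivAt_binLE (n k m : ℕ) (h : n = k + m + 1) (p : ℝ) :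
    HasDerivAt (fun p => binLE n p k) (-((m + 1) * n.choose k * p ^ k * (1 - p) ^ m)) p := by
  induction k generalizing m with
  | zero =>
    have h1 : (fun p => binLE n p 0) = fun p => (1 - p) ^ (m + 1) := by
      ext p; simp [binLE, binPMF, h]
    rw [h1]
    refine ((hasDerivAt_one_sub p).fun_pow (m + 1)).congr_deriv ?_
    simp
  | succ k ih =>
    have h1 : (fun p => binLE n p (k + 1)) =
        fun p => binLE n p k + n.choose (k + 1) * p ^ (k + 1) * (1 - p) ^ (m + 1) := by
      ext p
      rw [binLE, Finset.sum_range_succ, ← binLE, binPMF]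
      congr 3; omega
    rw [h1]
    have h2 := (ih (m + 1) (by omega)).fun_add ((((hasDerivAt_pow (k + 1) p).const_mul
      (n.choose (k + 1) : ℝ))).fun_mul ((hasDerivAt_one_sub p).fun_pow (m + 1)))
    refine h2.congr_deriv ?_
    have h3 : (n.choose (k + 1) : ℝ) * (k + 1) = n.choose k * (m + 2) := by
      have := Nat.choose_succ_right_eq n k
      rw [show n - k = m + 2 by omega] at this
      exact_mod_cast this
    simp only [Nat.add_sub_cancel]
    push_cast
    linear_combination p ^ k * (1 - p) ^ (m + 1) * h3

lemma hasDerivAt_binPMF (n k m : ℕ) (h : n = k + 1 + m + 1) (p : ℝ) :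
    HasDerivAt (fun p => binPMF n p (k + 1))
      (n.choose (k + 1) * p ^ k * (1 - p) ^ m * (k + 1 - n * p)) p := by
  have h1 : (fun p => binPMF n p (k + 1)) =
      fun p : ℝ => (n.choose (k + 1) : ℝ) * p ^ (k + 1) * (1 - p) ^ (m + 1) := by
    ext p; rw [binPMF]; congr 2; omega
  rw [h1]
  refine (((hasDerivAt_pow (k + 1) p).const_mul (n.choose (k + 1) : ℝ)).fun_mul
    ((hasDerivAt_one_sub p).fun_pow (m + 1))).congr_deriv ?_
  simp only [Nat.add_sub_cancel]
  rw [h]; push_cast; ring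

lemma monotoneOn_of_deriv_nonneg_of_ne {D : Set ℝ} (hD : D.OrdConnected) {f f' : ℝ → ℝ} (w : ℝ)
    (hf : ContinuousOn f D) (hd : ∀ x ∈ D, x ≠ w → HasDerivAt f (f' x) x)
    (h : ∀ x ∈ D, x ≠ w → 0 ≤ f' x) : MonotoneOn f D := by
  have key : ∀ a ∈ D, ∀ b ∈ D, a ≤ b → w ∉ Ioo a b → f a ≤ f b := by
    intro a ha b hb hab hw
    have hs := hD.out ha hb
    have hi : ∀ x ∈ interior (Icc a b), x ∈ D ∧ x ≠ w := fun x hx =>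
      ⟨hs (interior_subset hx), fun hxw => hw (by rwa [interior_Icc, hxw] at hx)⟩
    refine monotoneOn_of_deriv_nonneg (convex_Icc a b) (hf.mono hs) (fun x hx => ?_)
      (fun x hx => ?_) (left_mem_Icc.2 hab) (right_mem_Icc.2 hab) hab
    · exact (hd x (hi x hx).1 (hi x hx).2).differentiableAt.differentiableWithinAt
    · rw [(hd x (hi x hx).1 (hi x hx).2).deriv]
      exact h x (hi x hx).1 (hi x hx).2
  intro a ha b hb hab
  by_cases hw : w ∈ Ioo a b
  · have hwD : w ∈ D := hD.out ha hb ⟨hw.1.le, hw.2.le⟩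
    exact (key a ha w hwD hw.1.le (fun h' => lt_irrefl _ h'.2)).trans
      (key w hwD b hb hw.2.le (fun h' => lt_irrefl _ h'.1))
  · exact key a ha b hb hab hw

lemma hasDerivAt_Phi_signedRoot {n w p : ℝ} (hn : 0 < n) (hw : w ∈ Ioo (0 : ℝ) 1)
    (hp : p ∈ Ioo (0 : ℝ) 1) (h : p ≠ w) :
    HasDerivAt (fun p => Phi (signedRoot n w p)) (-(gaussDensity 0 * Real.exp (-(n * bernKL w p)) *
      (n * |p - w| / (p * (1 - p) * √(2 * n * bernKL w p))))) p := by
  have hK := bernKL_pos hw hp h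
  have hp0 := hp.1
  have hp1 := sub_pos.2 hp.2
  have hs : 0 < √(2 * n * bernKL w p) := Real.sqrt_pos.2 (by positivity)
  have hd := ((hasDerivAt_bernKL w hp).const_mul (2 * n)).sqrt (by positivity)
  have hg : gaussDensity (signedRoot n w p) = gaussDensity 0 * Real.exp (-(n * bernKL w p)) := by
    rw [gaussDensity_eq, signedRoot_sq hn.le hw hp]
    congr 2; ring
  rcases lt_or_gt_of_ne h with h1 | h1
  · have he : signedRoot n w =ᶠ[𝓝 p] fun p => √(2 * n * bernKL w p) := by
      filter_upwards [gt_mem_nhds h1] with x hx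
      rw [signedRoot, if_pos hx.le]
    refine ((hasDerivAt_Phi _).comp p (hd.congr_of_eventuallyEq he)).congr_deriv ?_
    rw [hg, abs_of_neg (sub_neg.2 h1)]
    field_simp
  · have he : signedRoot n w =ᶠ[𝓝 p] fun p => -√(2 * n * bernKL w p) := by
      filter_upwards [lt_mem_nhds h1] with x hx
      rw [signedRoot, if_neg hx.not_ge]
    refine ((hasDerivAt_Phi _).comp p (hd.fun_neg.congr_of_eventuallyEq he)).congr_deriv ?_
    rw [hg, abs_of_pos (sub_pos.2 h1)]
    field_simp

lemma tendsto_signedRoot_zero {n w : ℝ} (hn : 0 < n) (hw : w ∈ Ioo (0 : ℝ) 1) :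
    Tendsto (signedRoot n w) (𝓝[>] 0) atTop := by
  have h1 : Tendsto (fun p => w * (Real.log w - Real.log p)) (𝓝[>] 0) atTop := by
    refine Tendsto.const_mul_atTop hw.1 (tendsto_atTop_add_const_left _ _ ?_)
    exact tendsto_neg_atBot_atTop.comp Real.tendsto_log_nhdsGT_zero
  have h2 : Tendsto (fun p => (1 - w) * (Real.log (1 - w) - Real.log (1 - p))) (𝓝[>] 0)
      (𝓝 ((1 - w) * (Real.log (1 - w) - Real.log (1 - 0)))) := by
    have : ContinuousAt (fun p => (1 - w) * (Real.log (1 - w) - Real.log (1 - p))) 0 := by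
      have : ContinuousAt (fun p : ℝ => Real.log (1 - p)) 0 :=
        ContinuousAt.log (by fun_prop) (by norm_num)
      fun_prop
    exact this.tendsto.mono_left nhdsWithin_le_nhds
  have h3 : Tendsto (bernKL w) (𝓝[>] 0) atTop := h1.atTop_add h2
  have h4 := Real.tendsto_sqrt_atTop.comp (h3.const_mul_atTop (show 0 < 2 * n by positivity))
  refine h4.congr' ?_
  filter_upwards [nhdsWithin_le_nhds (gt_mem_nhds hw.1)] with p hp
  rw [signedRoot, if_pos (le_of_lt hp)]; rfl

/-- Comparison of the logarithms of the `p`-derivatives of the binomial distribution function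
(corrected by a multiple of the probability of the endpoint) and of its normal approximation. -/
lemma log_deriv_ratio {θ η w e c : ℝ} {n k m : ℕ} (hη : η ∈ Ioo (0 : ℝ) 1)
    (hn : n = k + 1 + m + 1) (hx : n * w = k + 1 + θ) (hw : w ∈ Ioo (0 : ℝ) 1)
    (he : 0 < e) (hc : 0 < c)
    (hbal : e * ((1 - η) * (k + 1) * (1 - w)) = (1 - e) * (η * w * (m + 1)))
    {p : ℝ} (hp : p ∈ Ioo (0 : ℝ) 1) (h : p ≠ w) :
    2 * (Real.log (gaussDensity 0 * Real.exp (-(n * bernKL w p)) *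
      (n * |p - w| / (p * (1 - p) * √(2 * n * bernKL w p))))
      - Real.log (c * p ^ k * (1 - p) ^ m * ((m + 1) * p + e * (k + 1 - n * p)))) =
    logRatio θ η w ((1 - w) * p / (w * (1 - p))) - (2 * θ * (Real.log (1 - w) - Real.log w)
      - 2 * Real.log w - 2 * Real.log (gaussDensity 0) + 2 * (n * w) * Real.log w
      + 2 * (n * (1 - w)) * Real.log (1 - w) - 2 * Real.log n + Real.log (2 * n)
      + 2 * Real.log c + 2 * Real.log (e * (k + 1) / η)) := by
  have hn0 : (0 : ℝ) < n := by rw [hn]; positivity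
  have hK := bernKL_pos hw hp h
  have hp0 := hp.1
  have hq0 := sub_pos.2 hp.2
  have hw0 := hw.1
  have hw1 := sub_pos.2 hw.2
  have hη0 := hη.1
  have hτ : 0 < (1 - w) * p / (w * (1 - p)) := by positivity
  have hτ1 : 1 - (1 - w) * p / (w * (1 - p)) = (w - p) / (w * (1 - p)) := by field_simp; ring
  have hpw : 0 < |p - w| := abs_pos.2 (sub_ne_zero.2 h)
  have hQ := linFac_pos hη hτ
  have hB : (m + 1) * p + e * (k + 1 - n * p) =
      (1 - p) * (e * (k + 1) / η) * linFac η ((1 - w) * p / (w * (1 - p))) := by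
    have hn' : (n : ℝ) = k + m + 2 := by rw [hn]; push_cast; ring
    unfold linFac
    rw [hn']
    field_simp
    linear_combination -p * hbal
  have hτne : (1 - w) * p / (w * (1 - p)) ≠ 1 := by
    intro h'
    rw [h', sub_self, eq_comm, div_eq_zero_iff] at hτ1
    rcases hτ1 with h1 | h1
    · exact h (by linarith)
    · exact absurd h1 (by positivity)
  have hA : Real.log (sqDivOddsKL w ((1 - w) * p / (w * (1 - p)))) =
      2 * (Real.log |p - w| - Real.log w - Real.log (1 - p)) - Real.log (bernKL w p) := by
    have h1 : (1 - (1 - w) * p / (w * (1 - p))) ^ 2 = (|p - w| / (w * (1 - p))) ^ 2 := by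
      rw [hτ1, div_pow, div_pow, sq_abs]; ring
    rw [sqDivOddsKL_of_ne hτne, oddsKL_eq_bernKL hw hp, h1, Real.log_div (by positivity) hK.ne',
      Real.log_pow, Real.log_div hpw.ne' (by positivity), Real.log_mul hw0.ne' hq0.ne']
    push_cast; ring
  have hlτ : Real.log ((1 - w) * p / (w * (1 - p))) =
      Real.log (1 - w) + Real.log p - Real.log w - Real.log (1 - p) := by
    rw [Real.log_div (by positivity) (by positivity), Real.log_mul hw1.ne' hp0.ne',
      Real.log_mul hw0.ne' hq0.ne']
    ring
  have hG : Real.log (gaussDensity 0 * Real.exp (-(n * bernKL w p)) *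
      (n * |p - w| / (p * (1 - p) * √(2 * n * bernKL w p)))) = Real.log (gaussDensity 0)
      - n * bernKL w p + (Real.log n + Real.log |p - w| - (Real.log p + Real.log (1 - p)
        + (Real.log (2 * n) + Real.log (bernKL w p)) / 2)) := by
    have hs : 0 < √(2 * n * bernKL w p) := Real.sqrt_pos.2 (by positivity)
    have hg := gaussDensity_pos 0
    rw [Real.log_mul (by positivity) (by positivity), Real.log_mul hg.ne' (Real.exp_pos _).ne',
      Real.log_exp, Real.log_div (by positivity) (by positivity), Real.log_mul hn0.ne' hpw.ne',
      Real.log_mul (by positivity) hs.ne', Real.log_mul hp0.ne' hq0.ne',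
      Real.log_sqrt (by positivity), Real.log_mul (by positivity) hK.ne']
    ring
  have hL : Real.log (c * p ^ k * (1 - p) ^ m * ((1 - p) * (e * (k + 1) / η) *
      linFac η ((1 - w) * p / (w * (1 - p))))) = Real.log c + k * Real.log p
      + m * Real.log (1 - p) + (Real.log (1 - p) + Real.log (e * (k + 1) / η)
      + Real.log (linFac η ((1 - w) * p / (w * (1 - p))))) := by
    rw [Real.log_mul (by positivity) (by positivity), Real.log_mul (by positivity)
      (by positivity), Real.log_mul hc.ne' (by positivity), Real.log_pow, Real.log_pow,
      Real.log_mul (by positivity) hQ.ne', Real.log_mul hq0.ne' (by positivity)]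
  rw [hG, hB, hL, logRatio, hA, hlτ]
  have hn' : (n : ℝ) = k + m + 2 := by rw [hn]; push_cast; ring
  have hθ : θ = n * w - k - 1 := by linarith
  have hm : (m : ℝ) = n - k - 2 := by linarith
  rw [hθ, hm]
  nth_rewrite 1 [bernKL]
  ring

lemma continuous_binPMF (n k : ℕ) : Continuous fun p => binPMF n p k := by
  unfold binPMF; fun_prop

lemma continuous_binLE (n k : ℕ) : Continuous fun p => binLE n p k := by
  unfold binLE
  exact continuous_finsetSum _ fun i _ => continuous_binPMF n i

lemma binLE_zero (n k : ℕ) : binLE n 0 k = 1 := by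
  rw [binLE, Finset.sum_range_succ']
  simp [binPMF]

lemma binLE_one {n k : ℕ} (h : k < n) : binLE n 1 k = 0 := by
  rw [binLE]
  refine Finset.sum_eq_zero fun i hi => ?_
  have : n - i ≠ 0 := by have := Finset.mem_range.1 hi; omega
  simp [binPMF, this]

/-- A normal upper bound for the binomial distribution function, at the signed root of the
divergence taken at the shifted point `k + 1 + θ`. -/
theorem binLE_le_Phi_signedRoot {θ η w e : ℝ} {n k m : ℕ} (hθ : θ ∈ Ioo (0 : ℝ) 1)
    (hη : η ∈ Ioo (0 : ℝ) 1) (hn : n = k + 1 + m + 1) (hx : n * w = k + 1 + θ)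
    (he0 : 0 < e) (he1 : e < 1)
    (hbal : e * ((1 - η) * (k + 1) * (1 - w)) = (1 - e) * (η * w * (m + 1)))
    (hc : RatioCond θ η w) {p : ℝ} (hp : p ∈ Ioo (0 : ℝ) 1) :
    binLE n p (k + 1) - e * binPMF n p (k + 1) ≤ Phi (signedRoot n w p) := by
  have hn0 : (0 : ℝ) < n := by rw [hn]; positivity
  have hn' : (n : ℝ) = k + m + 2 := by rw [hn]; push_cast; ring
  have hw : w ∈ Ioo (0 : ℝ) 1 := by
    have h1 : 0 < θ := hθ.1
    have h2 : θ < 1 := hθ.2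
    constructor
    · refine pos_of_mul_pos_right (a := (n : ℝ)) ?_ hn0.le
      rw [hx]; positivity
    · refine lt_of_mul_lt_mul_left (a := (n : ℝ)) ?_ hn0.le
      rw [hx, hn']
      have : (0 : ℝ) ≤ m := Nat.cast_nonneg m
      linarith
  have hw0 := hw.1
  have hw1 := sub_pos.2 hw.2
  set C : ℝ := (n.choose (k + 1) : ℝ) with hC
  have hC0 : 0 < C := by
    rw [hC]; exact_mod_cast Nat.choose_pos (by omega)
  set A : ℝ → ℝ := fun p => C * p ^ k * (1 - p) ^ m * ((m + 1) * p + e * (k + 1 - n * p)) with hA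
  set G : ℝ → ℝ := fun p => gaussDensity 0 * Real.exp (-(n * bernKL w p)) *
      (n * |p - w| / (p * (1 - p) * √(2 * n * bernKL w p))) with hG
  set E : ℝ → ℝ := fun p => binLE n p (k + 1) - e * binPMF n p (k + 1) - Phi (signedRoot n w p)
    with hE
  have hAp : ∀ p ∈ Ioo (0 : ℝ) 1, 0 < A p := by
    intro p hp
    have h1 := hp.1
    have h2 := sub_pos.2 hp.2
    have h3 : (m + 1) * p + e * (k + 1 - n * p) = e * (k + 1) * (1 - p)
        + (1 - e) * (m + 1) * p := by rw [hn']; ring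
    have h4 := sub_pos.2 he1
    simp only [hA]
    rw [h3]; positivity
  have hGp : ∀ p ∈ Ioo (0 : ℝ) 1, p ≠ w → 0 < G p := by
    intro p hp hpw
    have h1 := hp.1
    have h2 := sub_pos.2 hp.2
    have h3 := bernKL_pos hw hp hpw
    have h4 : 0 < √(2 * n * bernKL w p) := Real.sqrt_pos.2 (by positivity)
    have h5 : 0 < |p - w| := abs_pos.2 (sub_ne_zero.2 hpw)
    have h6 := gaussDensity_pos 0
    simp only [hG]
    positivity
  have hEc : ContinuousOn E (Ioo 0 1) :=
    (((continuous_binLE n (k + 1)).sub ((continuous_binPMF n (k + 1)).const_mul e)).continuousOn).sub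
      (continuous_Phi.comp_continuousOn continuousOn_signedRoot)
  have hEd : ∀ p ∈ Ioo (0 : ℝ) 1, p ≠ w → HasDerivAt E (G p - A p) p := by
    intro p hp hpw
    refine (((hasDerivAt_binLE n (k + 1) m (by omega) p).fun_sub
      ((hasDerivAt_binPMF n k m (by omega) p).const_mul e)).fun_sub
      (hasDerivAt_Phi_signedRoot hn0 hw hp hpw)).congr_deriv ?_
    simp only [hA, hG, hn']
    rw [← hC]
    ring
  obtain ⟨c0, hc0⟩ : ∃ c0, ∀ p ∈ Ioo (0 : ℝ) 1, p ≠ w → 2 * (Real.log (G p) - Real.log (A p)) =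
      logRatio θ η w ((1 - w) * p / (w * (1 - p))) - c0 :=
    ⟨_, fun p hp hpw => log_deriv_ratio hη hn hx hw he0 hC0 hbal hp hpw⟩
  have hτ : ∀ p ∈ Ioo (0 : ℝ) 1, (1 - w) * p / (w * (1 - p)) ∈ Ioi (0 : ℝ) := by
    intro p hp
    have h1 := hp.1
    have h2 := sub_pos.2 hp.2
    exact mem_Ioi.2 (by positivity)
  have hmono : ∀ p ∈ Ioo (0 : ℝ) 1, ∀ p' ∈ Ioo (0 : ℝ) 1, p ≤ p' →
      logRatio θ η w ((1 - w) * p / (w * (1 - p))) ≤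
      logRatio θ η w ((1 - w) * p' / (w * (1 - p'))) := by
    intro p hp p' hp' hpp
    refine monotoneOn_logRatio hθ hη hw hc (hτ p hp) (hτ p' hp') ?_
    have h1 := hp.1
    have h2 := sub_pos.2 hp'.2
    have h3 := hp'.1
    gcongr
  suffices hEp : E p ≤ 0 by
    simp only [hE] at hEp; linarith
  rcases le_total (logRatio θ η w ((1 - w) * p / (w * (1 - p)))) c0 with h | h
  · have hs : ∀ x ∈ Ioc 0 p, x ∈ Ioo (0 : ℝ) 1 := fun x hx => ⟨hx.1, hx.2.trans_lt hp.2⟩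
    have hm : MonotoneOn (fun x => -E x) (Ioc 0 p) := by
      refine monotoneOn_of_deriv_nonneg_of_ne ordConnected_Ioc (f' := fun x => -(G x - A x)) w
        (hEc.mono hs).neg (fun x hx hxw => (hEd x (hs x hx) hxw).fun_neg) fun x hx hxw => ?_
      have h1 := hc0 x (hs x hx) hxw
      have h2 := hmono x (hs x hx) p hp hx.2
      have h3 : G x ≤ A x := (Real.log_le_log_iff (hGp x (hs x hx) hxw) (hAp x (hs x hx))).1
        (by linarith)
      linarith
    have hlim : Tendsto E (𝓝[>] 0) (𝓝 (binLE n 0 (k + 1) - e * binPMF n 0 (k + 1) - 1)) :=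
      (((continuous_binLE n (k + 1)).sub
        ((continuous_binPMF n (k + 1)).const_mul e)).continuousAt.tendsto.mono_left
          nhdsWithin_le_nhds).sub (tendsto_Phi_atTop.comp (tendsto_signedRoot_zero hn0 hw))
    rw [binLE_zero, show binPMF n 0 (k + 1) = 0 by simp [binPMF]] at hlim
    have := ge_of_tendsto hlim (b := E p) (by
      filter_upwards [Ioc_mem_nhdsGT hp.1] with x hx
      have := hm hx (right_mem_Ioc.2 hp.1) hx.2
      simpa using this)
    linarith
  · have hs : ∀ x ∈ Ico p 1, x ∈ Ioo (0 : ℝ) 1 := fun x hx => ⟨hp.1.trans_le hx.1, hx.2⟩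
    have hm : MonotoneOn E (Ico p 1) := by
      refine monotoneOn_of_deriv_nonneg_of_ne ordConnected_Ico (f' := fun x => G x - A x) w
        (hEc.mono hs) (fun x hx hxw => hEd x (hs x hx) hxw) fun x hx hxw => ?_
      have h1 := hc0 x (hs x hx) hxw
      have h2 := hmono p hp x (hs x hx) hx.1
      have h3 : A x ≤ G x := (Real.log_le_log_iff (hAp x (hs x hx)) (hGp x (hs x hx) hxw)).1
        (by linarith)
      linarith
    have hlim : Tendsto (fun x => binLE n x (k + 1)) (𝓝[<] 1) (𝓝 (binLE n 1 (k + 1))) :=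
      (continuous_binLE n (k + 1)).continuousAt.tendsto.mono_left nhdsWithin_le_nhds
    rw [binLE_one (by omega)] at hlim
    refine ge_of_tendsto hlim ?_
    filter_upwards [Ico_mem_nhdsLT hp.2] with x hx
    have h1 := hm (left_mem_Ico.2 hp.2) hx hx.1
    have h2 : 0 ≤ e * binPMF n x (k + 1) := mul_nonneg he0.le (binPMF_nonneg (hs x hx))
    have h3 := Phi_nonneg (signedRoot n w x)
    simp only [hE] at h1 ⊢
    linarith

lemma ratioCond_two_thirds {w : ℝ} (hw : w ∈ Ioo (0 : ℝ) 1) : RatioCond (2 / 3) (1 / 40) w := by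
  intro τ hτ hP
  have hQ := linFac_pos (η := 1 / 40) ⟨by norm_num, by norm_num⟩ hτ
  have h0 : 0.04 ≤ τ := by
    simp only [quadFac, linFac] at hP
    nlinarith
  have h1 : 0 ≤ cubicFac (2 / 3) (1 / 40) τ := by
    simp only [cubicFac, quadFac, linFac]
    nlinarith [mul_nonneg (sub_nonneg.2 h0) (sq_nonneg (τ - 0.416))]
  have h2 := hw.1
  have h3 := sub_pos.2 hw.2
  positivity

lemma ratioCond_half {w : ℝ} (hw : 1 / 2 ≤ w) (hw1 : w < 1) : RatioCond (1 / 2) (3 / 50) w := by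
  intro τ hτ hP
  have h0 : 0.05 ≤ τ := by
    simp only [quadFac, linFac] at hP
    nlinarith
  have h1 : 0 ≤ cubicFac (1 / 2) (3 / 50) τ + linFac (3 / 50) τ * quadFac (1 / 2) (3 / 50) τ := by
    simp only [cubicFac, quadFac, linFac]
    nlinarith [mul_nonneg (sub_nonneg.2 h0) (sq_nonneg τ)]
  have h1' := mul_nonneg hτ.le h1
  have h2 : 0 ≤ cubicFac (1 / 2) (3 / 50) τ + τ * (cubicFac (1 / 2) (3 / 50) τ
      + linFac (3 / 50) τ * quadFac (1 / 2) (3 / 50) τ) := by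
    simp only [cubicFac, quadFac, linFac]
    nlinarith [mul_nonneg (sub_nonneg.2 h0) (sq_nonneg (τ - 0.4)), sq_nonneg (τ * (τ - 0.3)),
      mul_nonneg (sub_nonneg.2 h0) (sq_nonneg (τ - 0.3)), sq_nonneg (τ * (τ - 0.2))]
  nlinarith

lemma ratioCond_half' {w : ℝ} (hw : 3 / 4 ≤ w) (hw1 : w < 1) :
    RatioCond (1 / 2) (3 / 100) w := by
  intro τ hτ hP
  have h0 : 0.0275 ≤ τ := by
    simp only [quadFac, linFac] at hP
    nlinarith
  have h1 : 0 ≤ cubicFac (1 / 2) (3 / 100) τ +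
      linFac (3 / 100) τ * quadFac (1 / 2) (3 / 100) τ := by
    simp only [cubicFac, quadFac, linFac]
    nlinarith [mul_nonneg (sub_nonneg.2 h0) (sq_nonneg τ)]
  have h1' := mul_nonneg hτ.le h1
  have h2 : 0 ≤ cubicFac (1 / 2) (3 / 100) τ + 3 * (τ * (cubicFac (1 / 2) (3 / 100) τ
      + linFac (3 / 100) τ * quadFac (1 / 2) (3 / 100) τ)) := by
    simp only [cubicFac, quadFac, linFac]
    nlinarith [mul_nonneg (sub_nonneg.2 h0) (sq_nonneg (τ - 0.15)), sq_nonneg (τ * (τ - 0.15)),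
      mul_nonneg (sub_nonneg.2 h0) (sq_nonneg (τ - 0.2)), sq_nonneg (τ * (τ - 0.2)),
      mul_nonneg (sub_nonneg.2 h0) (sq_nonneg (τ - 0.17)), sq_nonneg (τ - 0.17)]
  nlinarith

lemma entropy_diff_le {v : ℝ} (h0 : 0 ≤ v) (h1 : v < 1) :
    (1 + v) * Real.log (1 + v) - (1 - v) * Real.log (1 - v) ≤ 2 * v := by
  have hm : MonotoneOn (fun v : ℝ => 2 * v - ((1 + v) * Real.log (1 + v) -
      (1 - v) * Real.log (1 - v))) (Ico 0 1) := by
    refine monotoneOn_of_hasDerivAt_nonneg (convex_Ico 0 1)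
      (F' := fun v => -Real.log (1 - v ^ 2)) (fun x hx => ?_) (fun x hx => ?_)
    · have hx0 : 0 < 1 + x := by linarith [hx.1]
      have hx1 : 0 < 1 - x := by linarith [hx.2]
      have e1 := ((hasDerivAt_id x).const_add 1)
      have e2 := ((hasDerivAt_id x).const_sub 1)
      have := (((hasDerivAt_id x).const_mul 2).fun_sub
        ((e1.fun_mul (e1.log hx0.ne')).fun_sub (e2.fun_mul (e2.log hx1.ne'))))
      refine this.congr_deriv ?_
      have e3 : Real.log (1 - x ^ 2) = Real.log (1 + x) + Real.log (1 - x) := by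
        rw [← Real.log_mul hx0.ne' hx1.ne']; congr 1; ring
      rw [e3]
      simp only [id]
      field_simp
      ring
    · have : Real.log (1 - x ^ 2) ≤ 0 :=
        Real.log_nonpos (by nlinarith [hx.1, hx.2]) (by nlinarith [sq_nonneg x])
      linarith
  have := hm ⟨le_rfl, one_pos⟩ ⟨h0, h1⟩ h0
  simp at this
  linarith

/-- The logarithm of the factor `(k + 1/2)^(k + 1/2) * exp (-k) / k!`. -/
noncomputable def logHalfStirling (k : ℕ) : ℝ :=
  (k + 1 / 2) * Real.log (k + 1 / 2) - k - Real.log k.factorial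

lemma logHalfStirling_succ_le (k : ℕ) : logHalfStirling (k + 1) ≤ logHalfStirling k := by
  unfold logHalfStirling
  have hm : (0 : ℝ) < k + 1 := by positivity
  have hk : (0 : ℝ) < k + 1 / 2 := by positivity
  have h := entropy_diff_le (v := 1 / (2 * (k + 1 : ℝ))) (by positivity)
    (by rw [div_lt_one (by positivity)]; linarith)
  have e1 : 1 + 1 / (2 * (k + 1 : ℝ)) = (k + 1 + 1 / 2) / (k + 1) := by field_simp
  have e2 : 1 - 1 / (2 * (k + 1 : ℝ)) = (k + 1 / 2) / (k + 1) := by field_simp; ring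
  rw [e1, e2, Real.log_div (by positivity) hm.ne', Real.log_div hk.ne' hm.ne'] at h
  have h2 := mul_le_mul_of_nonneg_left h hm.le
  have e3 : (k + 1 : ℝ) * ((k + 1 + 1 / 2) / (k + 1) *
      (Real.log (k + 1 + 1 / 2) - Real.log (k + 1)) -
      (k + 1 / 2) / (k + 1) * (Real.log (k + 1 / 2) - Real.log (k + 1))) =
      (k + 1 + 1 / 2) * Real.log (k + 1 + 1 / 2) - (k + 1 / 2) * Real.log (k + 1 / 2)
        - Real.log (k + 1) := by
    field_simp; ring
  have e4 : (k + 1 : ℝ) * (2 * (1 / (2 * (k + 1 : ℝ)))) = 1 := by field_simp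
  rw [e3, e4] at h2
  rw [Nat.factorial_succ]
  push_cast
  rw [Real.log_mul hm.ne' (by positivity)]
  linarith

lemma logHalfStirling_le {k : ℕ} (hk : 1 ≤ k) :
    logHalfStirling k ≤ 3 / 2 * Real.log (3 / 2) - 1 := by
  have h := antitone_nat_of_succ_le logHalfStirling_succ_le hk
  refine h.trans (le_of_eq ?_)
  norm_num [logHalfStirling]

lemma log_factorial_le {n : ℕ} (hn : 1 ≤ n) :
    Real.log n.factorial ≤ 1 + 1 / 2 * Real.log n + n * Real.log n - n := by
  obtain ⟨m, rfl⟩ := Nat.exists_eq_add_of_le' hn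
  have h := Stirling.log_stirlingSeq'_antitone (Nat.zero_le m)
  simp only [Function.comp, Nat.succ_eq_add_one, zero_add] at h
  rw [Stirling.log_stirlingSeq_formula, Stirling.log_stirlingSeq_formula] at h
  have hm : (0 : ℝ) < ((m + 1 : ℕ) : ℝ) := by positivity
  rw [Real.log_div hm.ne' (Real.exp_pos 1).ne', Real.log_mul two_ne_zero hm.ne', Real.log_exp] at h
  simp at h
  push_cast at h ⊢
  linarith

lemma gibbs_two {a b p : ℝ} (ha : 0 < a) (hb : 0 < b) (hp : p ∈ Ioo (0 : ℝ) 1) :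
    a * Real.log p + b * Real.log (1 - p) ≤
      a * Real.log a + b * Real.log b - (a + b) * Real.log (a + b) := by
  have hp0 := hp.1
  have hq0 := sub_pos.2 hp.2
  have hab : 0 < a + b := by positivity
  have h1 := Real.log_le_sub_one_of_pos (show 0 < p * (a + b) / a by positivity)
  have h2 := Real.log_le_sub_one_of_pos (show 0 < (1 - p) * (a + b) / b by positivity)
  rw [Real.log_div (by positivity) ha.ne', Real.log_mul hp0.ne' hab.ne'] at h1
  rw [Real.log_div (by positivity) hb.ne', Real.log_mul hq0.ne' hab.ne'] at h2
  have h3 := mul_le_mul_of_nonneg_left h1 ha.le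
  have h4 := mul_le_mul_of_nonneg_left h2 hb.le
  have e1 : a * (p * (a + b) / a - 1) = p * (a + b) - a := by field_simp
  have e2 : b * ((1 - p) * (a + b) / b - 1) = (1 - p) * (a + b) - b := by field_simp
  rw [e1] at h3
  rw [e2] at h4
  linarith

lemma sqrt_mul_binPMF_le {n k m : ℕ} (hn : n = k + m) (hk : 1 ≤ k) (hm : 1 ≤ m) {p : ℝ}
    (hp : p ∈ Ioo (0 : ℝ) 1) : √(n * p * (1 - p)) * binPMF n p k ≤ 0.457 := by
  have hp0 := hp.1
  have hq0 := sub_pos.2 hp.2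
  have hn1 : 1 ≤ n := by omega
  have hn0 : (0 : ℝ) < n := by positivity
  have hk0 : (0 : ℝ) < k := by positivity
  have hm0 : (0 : ℝ) < m := by positivity
  have hnk : (n : ℝ) = k + m := by rw [hn]; push_cast; ring
  have hch : (n.choose k : ℝ) = n.factorial / (k.factorial * m.factorial) := by
    rw [Nat.cast_choose ℝ (by omega : k ≤ n), show n - k = m by omega]
  have hs : 0 < √(n * p * (1 - p)) := Real.sqrt_pos.2 (by positivity)
  have hpos : 0 < √(n * p * (1 - p)) * binPMF n p k := by
    have : 0 < (n.choose k : ℝ) := by exact_mod_cast Nat.choose_pos (by omega)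
    unfold binPMF; positivity
  have hlog : Real.log (√(n * p * (1 - p)) * binPMF n p k) =
      1 / 2 * (Real.log n + Real.log p + Real.log (1 - p)) + (Real.log n.factorial
        - (Real.log k.factorial + Real.log m.factorial)) + k * Real.log p
        + m * Real.log (1 - p) := by
    unfold binPMF
    rw [hch, show n - k = m by omega, Real.log_mul hs.ne' (by positivity), Real.log_sqrt
      (by positivity), Real.log_mul (by positivity) (by positivity),
      Real.log_mul (by positivity) (by positivity), Real.log_mul (by positivity) (by positivity),
      Real.log_mul (by positivity) (by positivity), Real.log_div (by positivity) (by positivity),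
      Real.log_mul (by positivity) (by positivity), Real.log_pow, Real.log_pow]
    ring
  have h1 := gibbs_two (a := k + 1 / 2) (b := m + 1 / 2) (by positivity) (by positivity) hp
  have h2 := log_factorial_le hn1
  have h3 := logHalfStirling_le hk
  have h4 := logHalfStirling_le hm
  unfold logHalfStirling at h3 h4
  have h5 : (n + 1) * Real.log n + 1 ≤ (n + 1) * Real.log (n + 1) := by
    have := Real.log_le_sub_one_of_pos (show (0 : ℝ) < n / (n + 1) by positivity)
    rw [Real.log_div hn0.ne' (by positivity)] at this
    have h6 := mul_le_mul_of_nonneg_left this (show (0 : ℝ) ≤ n + 1 by positivity)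
    have e : ((n : ℝ) + 1) * (n / (n + 1) - 1) = -1 := by field_simp; ring
    rw [e] at h6
    linarith
  have e1 : (k + 1 / 2 + (m + 1 / 2) : ℝ) = n + 1 := by rw [hnk]; ring
  rw [e1] at h1
  have hfin : Real.log (√(n * p * (1 - p)) * binPMF n p k) ≤ 3 * Real.log (3 / 2) - 2 := by
    rw [hlog]; linarith
  rw [← Real.exp_log hpos]
  refine (Real.exp_le_exp.2 hfin).trans ?_
  rw [Real.exp_sub, show (3 : ℝ) * Real.log (3 / 2) = ((3 : ℕ) : ℝ) * Real.log (3 / 2) by norm_num,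
    ← Real.log_pow, Real.exp_log (by positivity), show (2 : ℝ) = 1 + 1 by norm_num, Real.exp_add]
  rw [div_le_iff₀ (by positivity)]
  nlinarith [Real.exp_one_gt_d9]

lemma sum_binPMF (n : ℕ) (p : ℝ) : ∑ i ∈ Finset.range (n + 1), binPMF n p i = 1 := by
  have h := add_pow p (1 - p) n
  rw [add_sub_cancel, one_pow] at h
  rw [h]
  exact Finset.sum_congr rfl fun i _ => by unfold binPMF; ring

lemma binPMF_reflect {n k : ℕ} (h : k ≤ n) (p : ℝ) : binPMF n (1 - p) (n - k) = binPMF n p k := by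
  unfold binPMF
  rw [Nat.choose_symm h, Nat.sub_sub_self h, sub_sub_cancel]
  ring

lemma binLE_reflect {n k : ℕ} (h : k ≤ n) (p : ℝ) :
    binLE n (1 - p) (n - k) = 1 - ∑ i ∈ Finset.range k, binPMF n p i := by
  have h0 := Finset.sum_Ico_eq_sub (fun i => binPMF n p i) (by omega : k ≤ n + 1)
  rw [sum_binPMF] at h0
  rw [← h0]
  have h1 := Finset.sum_Ico_reflect (fun i => binPMF n (1 - p) i) k (le_refl (n + 1))
  rw [binLE, show n - k + 1 = n + 1 - k by omega, ← Nat.Ico_zero_eq_range]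
  simp only [Nat.sub_self] at h1
  rw [← h1]
  refine Finset.sum_congr rfl fun i hi => ?_
  rw [Finset.mem_Ico] at hi
  exact binPMF_reflect (by omega) p

lemma Phi_signedRoot_le {η w e : ℝ} {n k m : ℕ} (hη : η ∈ Ioo (0 : ℝ) 1)
    (hn : n = m + 1 + k + 1) (hx : n * w = k + 1 - 1 / 2) (he0 : 0 < e) (he1 : e < 1)
    (hbal : e * ((1 - η) * (m + 1) * w) = (1 - e) * (η * (1 - w) * (k + 1)))
    (hc : RatioCond (1 / 2) η (1 - w)) {p : ℝ} (hp : p ∈ Ioo (0 : ℝ) 1) :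
    Phi (signedRoot n w p) ≤
      ∑ i ∈ Finset.range (k + 1), binPMF n p i + e * binPMF n p (k + 1) := by
  have hnr : (n : ℝ) = m + 1 + k + 1 := by rw [hn]; push_cast; ring
  have h := binLE_le_Phi_signedRoot (θ := 1 / 2) (w := 1 - w) (by norm_num) hη hn
    (by rw [mul_sub, hx, hnr]; ring) he0 he1 (by rw [← hbal]; ring) hc
    (p := 1 - p) ⟨by linarith [hp.2], by linarith [hp.1]⟩
  rw [signedRoot_symm, Phi_neg, show m + 1 = n - (k + 1) by omega, binLE_reflect (by omega),
    binPMF_reflect (by omega)] at h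
  linarith

lemma std_dev_pos {n : ℕ} (hn : 1 ≤ n) {p : ℝ} (hp : p ∈ Ioo (0 : ℝ) 1) :
    0 < √(n * p * (1 - p)) := by
  have hp0 := hp.1
  have hq0 := sub_pos.2 hp.2
  have : (0 : ℝ) < n := by positivity
  exact Real.sqrt_pos.2 (by positivity)

lemma signedRoot_le_standardized {n : ℕ} (hn : 1 ≤ n) {w p : ℝ} (hw0 : 0 < w) (hw : w ≤ 1 / 2)
    (hp0 : 0 < p) (hp : p ≤ 1 / 2) :
    signedRoot n w p ≤ (n * w - n * p) / √(n * p * (1 - p)) := by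
  have hn0 : (0 : ℝ) < n := by positivity
  have hq : 0 < 1 - p := by linarith
  have hs := std_dev_pos hn ⟨hp0, by linarith⟩
  have hs2 : √(n * p * (1 - p)) ^ 2 = n * p * (1 - p) := Real.sq_sqrt (by positivity)
  have key : 2 * n * ((w - p) ^ 2 / (2 * (p * (1 - p)))) =
      ((n * w - n * p) / √(n * p * (1 - p))) ^ 2 := by
    rw [div_pow, hs2]; field_simp
  unfold signedRoot
  split_ifs with h
  · rw [Real.sqrt_le_left (div_nonneg (by nlinarith) hs.le), ← key]
    exact mul_le_mul_of_nonneg_left (bernKL_le_quad hp0 hw h) (by positivity)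
  · push Not at h
    rw [neg_le, ← neg_div]
    apply Real.le_sqrt_of_sq_le
    rw [neg_div, neg_sq, ← key]
    exact mul_le_mul_of_nonneg_left (quad_le_bernKL hw0 hp h.le) (by positivity)

lemma upper_deviation_le_of_le_half {n k : ℕ} (hk : 1 ≤ k) (hn : 2 * k + 2 ≤ n) {p : ℝ}
    (hp0 : 0 < p) (hp1 : p ≤ 0.1689) :
    √(n * p * (1 - p)) * (binLE n p k - Phi ((k - n * p) / √(n * p * (1 - p)))) ≤
      0.4095 * (p ^ 2 + (1 - p) ^ 2) := by
  obtain ⟨a, rfl⟩ := Nat.exists_eq_add_of_le' hk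
  obtain ⟨b, hb⟩ := Nat.exists_eq_add_of_le (show a + 1 + 1 ≤ n by omega)
  have hp : p ∈ Ioo (0 : ℝ) 1 := ⟨hp0, by norm_num at hp1; linarith⟩
  have hnr : (n : ℝ) = a + 1 + b + 1 := by rw [hb]; push_cast; ring
  have hba : (a : ℝ) + 2 ≤ b := by exact_mod_cast (show a + 2 ≤ b by omega)
  have ha0 : (0 : ℝ) ≤ a := by positivity
  have hn0 : (0 : ℝ) < n := by linarith
  set σ := √(n * p * (1 - p)) with hσ
  have hs : 0 < σ := std_dev_pos (by omega) hp
  obtain ⟨w, hw⟩ : ∃ w : ℝ, w = (a + 1 + 2 / 3) / n := ⟨_, rfl⟩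
  have hnw : (n : ℝ) * w = a + 1 + 2 / 3 := by rw [hw]; field_simp
  have hw0 : 0 < w := by rw [hw]; positivity
  have hw2 : w ≤ 1 / 2 := by rw [hw, div_le_iff₀ hn0]; linarith
  have hq : (n : ℝ) * (1 - w) = b + 1 / 3 := by rw [mul_sub, hnw, hnr]; ring
  set A : ℝ := (1 - 1 / 40) * (a + 1) * (1 - w) with hA
  set B : ℝ := 1 / 40 * w * (b + 1) with hB
  have hA0 : 0 < A := by have : 0 < 1 - w := by linarith
                         positivity
  have hB0 : 0 < B := by positivity
  have hBA : B ≤ 0.055 * A := by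
    have h1 : n * B = 1 / 40 * (a + 1 + 2 / 3) * (b + 1) := by rw [hB, ← hnw]; ring
    have h2 : n * A = (1 - 1 / 40) * (a + 1) * (b + 1 / 3) := by rw [hA, ← hq]; ring
    have : n * B ≤ n * (0.055 * A) := by
      rw [h1, show n * (0.055 * A) = 0.055 * (n * A) by ring, h2]
      nlinarith [mul_nonneg ha0 (show (0 : ℝ) ≤ b by positivity)]
    exact le_of_mul_le_mul_left this hn0
  have he : B / (A + B) ≤ 0.0522 := by
    rw [div_le_iff₀ (by positivity)]; norm_num at hBA ⊢; linarith
  have h := binLE_le_Phi_signedRoot (θ := 2 / 3) (η := 1 / 40) (w := w) (e := B / (A + B))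
    (n := n) (k := a) (m := b) (by norm_num) (by norm_num) (by omega) hnw (by positivity)
    (by rw [div_lt_one (by positivity)]; linarith)
    (by rw [← hA, ← hB]; field_simp; ring) (ratioCond_two_thirds ⟨hw0, by linarith⟩) hp
  have h2 := signedRoot_le_standardized (n := n) (by omega) hw0 hw2 hp0
    (by norm_num at hp1; linarith)
  rw [← hσ] at h2
  have h3 := Phi_mono h2
  have h4 : Phi ((n * w - n * p) / σ) - Phi (((a + 1 : ℕ) - n * p) / σ) ≤
      gaussDensity 0 * (2 / 3 / σ) := by
    have e : 2 / 3 / σ = (n * w - n * p) / σ - ((a + 1 : ℕ) - n * p) / σ := by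
      rw [hnw]; push_cast; field_simp; ring
    rw [e]
    refine Phi_sub_le ?_
    have : 0 ≤ 2 / 3 / σ := by positivity
    linarith
  have h5 := sqrt_mul_binPMF_le (n := n) (k := a + 1) (m := b + 1) (by omega) (by omega)
    (by omega) hp
  rw [← hσ] at h5
  have h6 : 0 ≤ σ * binPMF n p (a + 1) := mul_nonneg hs.le (binPMF_nonneg hp)
  have h7 : binLE n p (a + 1) - Phi (((a + 1 : ℕ) - n * p) / σ) ≤
      B / (A + B) * binPMF n p (a + 1) + gaussDensity 0 * (2 / 3 / σ) := by linarith
  calc _ ≤ σ * (B / (A + B) * binPMF n p (a + 1) + gaussDensity 0 * (2 / 3 / σ)) :=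
        mul_le_mul_of_nonneg_left h7 hs.le
    _ = B / (A + B) * (σ * binPMF n p (a + 1)) + gaussDensity 0 * (2 / 3) := by field_simp
    _ ≤ 0.0522 * 0.457 + 0.39895 * (2 / 3) := by
        refine add_le_add (mul_le_mul he h5 h6 (by norm_num)) ?_
        linarith [gaussDensity_zero_bounds.2]
    _ ≤ _ := by
        norm_num at hp1 ⊢
        nlinarith

lemma variance_binPMF (n : ℕ) (p : ℝ) :
    ∑ i ∈ Finset.range (n + 1), (n * p - i) ^ 2 * binPMF n p i = n * p * (1 - p) := by
  have h := congrArg (Polynomial.eval p) (bernsteinPolynomial.variance ℝ n)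
  simp only [Polynomial.eval_finsetSum, Polynomial.eval_mul, Polynomial.eval_pow,
    Polynomial.eval_sub, nsmul_eq_mul, Polynomial.eval_natCast, Polynomial.eval_X,
    Polynomial.eval_one, bernsteinPolynomial] at h
  rw [← h]
  rfl

lemma one_sub_sum_binPMF_mul_le {n k : ℕ} (hk : k ≤ n + 1) {p : ℝ} (hp : p ∈ Ioo (0 : ℝ) 1)
    (hd : n * p ≤ k) :
    (1 - ∑ i ∈ Finset.range k, binPMF n p i) * (k - n * p) ^ 2 ≤ n * p * (1 - p) := by
  have h0 := Finset.sum_Ico_eq_sub (fun i => binPMF n p i) hk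
  rw [sum_binPMF] at h0
  rw [← h0, ← variance_binPMF, Finset.sum_mul, ← Nat.Ico_zero_eq_range]
  refine (Finset.sum_le_sum fun i hi => ?_).trans (Finset.sum_le_sum_of_subset_of_nonneg
    (Finset.Ico_subset_Ico_left (Nat.zero_le k)) fun i _ _ => ?_)
  · rw [Finset.mem_Ico] at hi
    have : (k : ℝ) ≤ i := by exact_mod_cast hi.1
    rw [mul_comm]
    exact mul_le_mul_of_nonneg_right (by nlinarith) (binPMF_nonneg hp)
  · exact mul_nonneg (sq_nonneg _) (binPMF_nonneg hp)

lemma exp_neg_half_lt : Real.exp (-(1 / 2)) < 0.6066 := by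
  have h : Real.exp (-(1 / 2)) ^ 2 < 0.6066 ^ 2 := by
    rw [← Real.exp_nat_mul, show ((2 : ℕ) : ℝ) * -(1 / 2) = -1 by norm_num, Real.exp_neg,
      inv_lt_comm₀ (Real.exp_pos 1) (by norm_num)]
    exact lt_trans (by norm_num) Real.exp_one_gt_d9
  exact lt_of_pow_lt_pow_left₀ 2 (by norm_num) h

lemma exp_neg_nine_tenths_lt : Real.exp (-0.9) < 0.4067 := by
  have h : Real.exp (-0.9) ^ 10 < 0.4067 ^ 10 := by
    rw [← Real.exp_nat_mul, show ((10 : ℕ) : ℝ) * -0.9 = -((9 : ℕ) * 1) by norm_num, Real.exp_neg,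
      Real.exp_nat_mul, inv_lt_comm₀ (by positivity) (by norm_num)]
    refine lt_of_lt_of_le ?_ (pow_le_pow_left₀ (by norm_num) Real.exp_one_gt_d9.le 9)
    norm_num
  exact lt_of_pow_lt_pow_left₀ 10 (by norm_num) h

lemma exp_neg_mul_le (a x : ℝ) : Real.exp (-x) * (1 + x - a) ≤ Real.exp (-a) := by
  have h := Real.add_one_le_exp (x - a)
  calc _ ≤ Real.exp (-x) * Real.exp (x - a) :=
        mul_le_mul_of_nonneg_left (by linarith) (Real.exp_pos _).le
    _ = _ := by rw [← Real.exp_add]; ring_nf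

lemma mul_exp_neg_sq_half_le (t : ℝ) : t * Real.exp (-t ^ 2 / 2) ≤ 0.6066 := by
  have h := exp_neg_mul_le (1 / 2) (t ^ 2 / 2)
  rw [show -(t ^ 2 / 2) = -t ^ 2 / 2 by ring] at h
  have h2 := exp_neg_half_lt
  have h3 := Real.exp_pos (-t ^ 2 / 2)
  nlinarith [mul_nonneg h3.le (sq_nonneg (t - 1))]

lemma mul_exp_sub_half_le {t : ℝ} (ht : 0 ≤ t) (h2 : t ≤ 1.22) :
    t * (Real.exp (-(0.9 * t ^ 2)) - 1 / 2 + 0.39895 * t) ≤ 0.35 := by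
  have hE := Real.exp_pos (-(0.9 * t ^ 2))
  rcases le_total t 1 with h | h
  · have h3 := exp_neg_mul_le (1 / 2) (0.9 * t ^ 2)
    have h4 := exp_neg_half_lt
    have h5 : Real.exp (-(0.9 * t ^ 2)) ≤ 0.6066 / (1 / 2 + 0.9 * t ^ 2) := by
      rw [le_div_iff₀ (by positivity)]; linarith
    have h6 : t * (0.6066 / (1 / 2 + 0.9 * t ^ 2) - 1 / 2 + 0.39895 * t) ≤ 0.35 := by
      have : t * (0.6066 / (1 / 2 + 0.9 * t ^ 2) - 1 / 2 + 0.39895 * t) - 0.35 =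
        (0.6066 * t + (0.39895 * t ^ 2 - t / 2 - 0.35) * (1 / 2 + 0.9 * t ^ 2)) /
          (1 / 2 + 0.9 * t ^ 2) := by field_simp; ring
      have h7 : 0.6066 * t + (0.39895 * t ^ 2 - t / 2 - 0.35) * (1 / 2 + 0.9 * t ^ 2) ≤ 0 := by
        norm_num
        nlinarith [mul_nonneg ht (sub_nonneg.2 h), sq_nonneg (t * (t - 1)), sq_nonneg (t - 3 / 4),
          mul_nonneg ht (mul_nonneg ht (sub_nonneg.2 h)), sq_nonneg (t ^ 2 - 1 / 2)]
      have h8 := div_nonpos_of_nonpos_of_nonneg h7 (show 0 ≤ 1 / 2 + 0.9 * t ^ 2 by positivity)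
      linarith
    refine le_trans (mul_le_mul_of_nonneg_left ?_ ht) h6
    linarith
  · have h3 := exp_neg_mul_le 0.9 (0.9 * t ^ 2)
    have h4 := exp_neg_nine_tenths_lt
    have h0 : 0 < 0.1 + 0.9 * t ^ 2 := by positivity
    have h5 : Real.exp (-(0.9 * t ^ 2)) ≤ 0.4067 / (0.1 + 0.9 * t ^ 2) := by
      rw [le_div_iff₀ (by positivity)]; norm_num at h3 h4 ⊢; linarith
    have h6 : t * (0.4067 / (0.1 + 0.9 * t ^ 2) - 1 / 2 + 0.39895 * t) ≤ 0.35 := by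
      have : t * (0.4067 / (0.1 + 0.9 * t ^ 2) - 1 / 2 + 0.39895 * t) - 0.35 =
        (0.4067 * t + (0.39895 * t ^ 2 - t / 2 - 0.35) * (0.1 + 0.9 * t ^ 2)) /
          (0.1 + 0.9 * t ^ 2) := by field_simp; ring
      have h7 : 0.4067 * t + (0.39895 * t ^ 2 - t / 2 - 0.35) * (0.1 + 0.9 * t ^ 2) ≤ 0 := by
        norm_num at h2 ⊢
        nlinarith [mul_nonneg (sub_nonneg.2 h2) (sub_nonneg.2 h), sq_nonneg (t * (t - 1)),
          mul_nonneg ht (mul_nonneg (sub_nonneg.2 h2) (sub_nonneg.2 h)),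
          mul_nonneg (mul_nonneg ht ht) (mul_nonneg (sub_nonneg.2 h2) (sub_nonneg.2 h))]
      have h8 := div_nonpos_of_nonpos_of_nonneg h7 h0.le
      linarith
    refine le_trans (mul_le_mul_of_nonneg_left ?_ ht) h6
    linarith

lemma mul_exp_le_of_ge {t : ℝ} (ht : 1.22 ≤ t) : t * Real.exp (-(0.9 * t ^ 2)) ≤ 0.35 := by
  have hE := Real.exp_pos (-(0.9 * t ^ 2))
  have h3 := exp_neg_mul_le 0.9 (0.9 * t ^ 2)
  have h4 := exp_neg_nine_tenths_lt
  norm_num at ht h3 h4 ⊢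
  have h5 : (4067 / 3500) * t ≤ 1 / 10 + 9 / 10 * t ^ 2 := by nlinarith
  nlinarith [mul_le_mul_of_nonneg_left h5 hE.le]

lemma one_sub_le_sq_add_sq {p : ℝ} (hp1 : p ≤ 0.1689) :
    0.35 * (1 - p) ≤ 0.4095 * (p ^ 2 + (1 - p) ^ 2) := by
  norm_num at hp1 ⊢
  nlinarith

lemma standardized_zero {n : ℕ} (hn : 1 ≤ n) {p : ℝ} (hp : p ∈ Ioo (0 : ℝ) 1) :
    ∃ t : ℝ, 0 ≤ t ∧ √(n * p * (1 - p)) = (1 - p) * t ∧ n * p = (1 - p) * t ^ 2 ∧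
      (0 - n * p) / √(n * p * (1 - p)) = -t := by
  have hp0 := hp.1
  have hq0 := sub_pos.2 hp.2
  have hs := std_dev_pos hn hp
  have hs2 : √(n * p * (1 - p)) ^ 2 = n * p * (1 - p) := Real.sq_sqrt (by positivity)
  refine ⟨√(n * p * (1 - p)) / (1 - p), by positivity, by field_simp, ?_, ?_⟩
  · rw [div_pow, hs2]; field_simp
  · rw [div_eq_iff hs.ne', neg_mul, div_mul_eq_mul_div, ← sq, hs2]; field_simp; ring

lemma lower_deviation_zero_le {n : ℕ} (hn : 1 ≤ n) {p : ℝ} (hp0 : 0 < p) (hp1 : p ≤ 0.1689) :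
    √(n * p * (1 - p)) * Phi ((0 - n * p) / √(n * p * (1 - p))) ≤
      0.4095 * (p ^ 2 + (1 - p) ^ 2) := by
  have hp : p ∈ Ioo (0 : ℝ) 1 := ⟨hp0, by norm_num at hp1; linarith⟩
  have hq0 := sub_pos.2 hp.2
  obtain ⟨t, ht, h1, -, h2⟩ := standardized_zero hn hp
  rw [h2, h1]
  have h3 := Phi_neg_le_exp ht
  have h4 := mul_exp_neg_sq_half_le t
  refine le_trans ?_ (one_sub_le_sq_add_sq hp1)
  have h5 : t * Phi (-t) ≤ 0.35 := by
    have := mul_le_mul_of_nonneg_left h3 ht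
    norm_num at h4 ⊢; linarith
  nlinarith

lemma upper_deviation_zero_le {n : ℕ} (hn : 1 ≤ n) {p : ℝ} (hp0 : 0 < p) (hp1 : p ≤ 0.1689) :
    √(n * p * (1 - p)) * (binLE n p 0 - Phi ((0 - n * p) / √(n * p * (1 - p)))) ≤
      0.4095 * (p ^ 2 + (1 - p) ^ 2) := by
  have hp : p ∈ Ioo (0 : ℝ) 1 := ⟨hp0, by norm_num at hp1; linarith⟩
  have hq0 := sub_pos.2 hp.2
  obtain ⟨t, ht, h1, h0, h2⟩ := standardized_zero hn hp
  rw [h2, h1]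
  have hb : binLE n p 0 ≤ Real.exp (-(0.9 * t ^ 2)) := by
    have e1 : binLE n p 0 = (1 - p) ^ n := by simp [binLE, binPMF]
    have e2 := Real.le_log_one_add_of_nonneg (show 0 ≤ p / (1 - p) by positivity)
    have e3 : 1 + p / (1 - p) = (1 - p)⁻¹ := by field_simp; ring
    have e4 : 2 * (p / (1 - p)) / (p / (1 - p) + 2) = 2 * p / (2 - p) := by
      have : 0 < 2 - p := by linarith
      field_simp; ring
    rw [e3, e4, Real.log_inv] at e2
    rw [e1, ← Real.exp_log (pow_pos hq0 n), Real.log_pow]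
    apply Real.exp_le_exp.2
    have e5 : (n : ℝ) * (2 * p / (2 - p)) = 2 * (1 - p) / (2 - p) * t ^ 2 := by
      rw [mul_div_assoc', show (n : ℝ) * (2 * p) = 2 * (n * p) by ring, h0]; ring
    have e6 : 0.9 ≤ 2 * (1 - p) / (2 - p) := by
      rw [le_div_iff₀ (by linarith)]; norm_num at hp1 ⊢; linarith
    have e7 := mul_le_mul_of_nonneg_right e6 (sq_nonneg t)
    have e8 := mul_le_mul_of_nonneg_left e2 (show (0 : ℝ) ≤ n by positivity)
    rw [e5] at e8
    linarith
  refine le_trans ?_ (one_sub_le_sq_add_sq hp1)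
  have h5 : t * (binLE n p 0 - Phi (-t)) ≤ 0.35 := by
    rcases le_total t 1.22 with h | h
    · refine le_trans (mul_le_mul_of_nonneg_left ?_ ht) (mul_exp_sub_half_le ht h)
      have h6 := Phi_sub_le (neg_nonpos.2 ht)
      rw [Phi_zero] at h6
      have := mul_le_mul_of_nonneg_right gaussDensity_zero_bounds.2.le ht
      linarith
    · refine le_trans (mul_le_mul_of_nonneg_left ?_ ht) (mul_exp_le_of_ge h)
      linarith [Phi_nonneg (-t)]
  nlinarith

lemma mul_one_sub_le {p : ℝ} (hp1 : p ≤ 0.1689) : p * (1 - p) ≤ 0.1404 := by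
  norm_num at hp1 ⊢
  nlinarith

lemma sq_add_sq_ge {p : ℝ} (hp1 : p ≤ 0.1689) : 0.2945 ≤ 0.4095 * (p ^ 2 + (1 - p) ^ 2) := by
  norm_num at hp1 ⊢
  nlinarith

lemma binLE_le_one {n k : ℕ} (hk : k ≤ n) {p : ℝ} (hp : p ∈ Ioo (0 : ℝ) 1) : binLE n p k ≤ 1 := by
  rw [← sum_binPMF n p]
  exact Finset.sum_le_sum_of_subset_of_nonneg (Finset.range_subset_range.2 (by omega))
    fun i _ _ => binPMF_nonneg hp

lemma upper_deviation_le_of_half_le {n k : ℕ} (hk : 1 ≤ k) (hkn : k ≤ n) (hn : n ≤ 2 * k + 1)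
    {p : ℝ} (hp0 : 0 < p) (hp1 : p ≤ 0.1689) :
    √(n * p * (1 - p)) * (binLE n p k - Phi ((k - n * p) / √(n * p * (1 - p)))) ≤
      0.4095 * (p ^ 2 + (1 - p) ^ 2) := by
  have hp : p ∈ Ioo (0 : ℝ) 1 := ⟨hp0, by norm_num at hp1; linarith⟩
  have hq0 := sub_pos.2 hp.2
  have hs := std_dev_pos (n := n) (by omega) hp
  have hs2 : √(n * p * (1 - p)) ^ 2 = n * p * (1 - p) := Real.sq_sqrt (by positivity)
  set σ := √(n * p * (1 - p))
  refine le_trans ?_ (sq_add_sq_ge hp1)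
  have hkr : (1 : ℝ) ≤ k := by exact_mod_cast hk
  have hnr : (n : ℝ) ≤ 2 * k + 1 := by exact_mod_cast hn
  have hd : 0.6622 * k - 0.1689 ≤ k - n * p := by
    have := mul_le_mul hnr hp1 hp0.le (by positivity)
    linarith
  have hd0 : 0 < k - n * p := by norm_num at hd; linarith
  have hv : σ ^ 2 ≤ 0.1404 * (2 * k + 1) := by
    rw [hs2, mul_assoc, mul_comm (0.1404 : ℝ)]
    exact mul_le_mul hnr (mul_one_sub_le hp1) (by positivity) (by positivity)
  have h1 : binLE n p k - Phi ((k - n * p) / σ) ≤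
      1 / 2 * Real.exp (-((k - n * p) / σ) ^ 2 / 2) := by
    have := Phi_neg_le_exp (div_nonneg hd0.le hs.le)
    rw [Phi_neg] at this
    linarith [binLE_le_one hkn hp]
  have h2 : Real.exp (-((k - n * p) / σ) ^ 2 / 2) * (σ ^ 2 + (k - n * p) ^ 2 / 2) ≤ σ ^ 2 := by
    have := exp_neg_mul_le 0 (((k - n * p) / σ) ^ 2 / 2)
    rw [neg_zero, Real.exp_zero] at this
    have h3 := mul_le_mul_of_nonneg_right this (sq_nonneg σ)
    calc _ = _ := by rw [neg_div]; field_simp; ring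
      _ ≤ _ := h3
      _ = _ := by ring
  set E := Real.exp (-((k - n * p) / σ) ^ 2 / 2)
  have hE : 0 < E := Real.exp_pos _
  set D := (k : ℝ) - n * p
  have hσ : σ ≤ 0.625 * σ ^ 2 + 0.4 := by norm_num; nlinarith [sq_nonneg (σ - 4 / 5)]
  have h4 : σ ^ 2 * σ ≤ 0.2945 * (2 * σ ^ 2 + D ^ 2) := by
    have hD2 : (0.6622 * k - 0.1689) ^ 2 ≤ D ^ 2 :=
      pow_le_pow_left₀ (by norm_num; linarith) hd 2
    have h5 := mul_le_mul_of_nonneg_left hσ (sq_nonneg σ)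
    have h6 : σ ^ 2 * (0.625 * σ ^ 2 - 0.189) ≤
        0.1404 * (2 * k + 1) * (0.625 * (0.1404 * (2 * k + 1)) - 0.189) := by
      refine mul_le_mul_of_nonneg hv (by linarith) (by positivity) ?_
      norm_num; linarith
    norm_num at h5 h6 hD2 ⊢
    nlinarith
  calc σ * (binLE n p k - Phi (D / σ)) ≤ σ * (1 / 2 * E) := mul_le_mul_of_nonneg_left h1 hs.le
    _ ≤ _ := by
      have h7 : σ * (1 / 2 * E) * (2 * σ ^ 2 + D ^ 2) ≤ 0.2945 * (2 * σ ^ 2 + D ^ 2) := by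
        refine le_trans ?_ h4
        nlinarith
      exact le_of_mul_le_mul_right h7 (by positivity)

lemma lower_deviation_le_of_half_le {n k : ℕ} (hk : 1 ≤ k) (hkn : k ≤ n) (hn : n + 1 ≤ 2 * k)
    {p : ℝ} (hp0 : 0 < p) (hp1 : p ≤ 0.1689) :
    √(n * p * (1 - p)) * (Phi ((k - n * p) / √(n * p * (1 - p))) -
      ∑ i ∈ Finset.range k, binPMF n p i) ≤ 0.4095 * (p ^ 2 + (1 - p) ^ 2) := by
  have hp : p ∈ Ioo (0 : ℝ) 1 := ⟨hp0, by norm_num at hp1; linarith⟩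
  have hq0 := sub_pos.2 hp.2
  have hs := std_dev_pos (n := n) (by omega) hp
  have hs2 : √(n * p * (1 - p)) ^ 2 = n * p * (1 - p) := Real.sq_sqrt (by positivity)
  set σ := √(n * p * (1 - p))
  refine le_trans ?_ (sq_add_sq_ge hp1)
  have hkr : (1 : ℝ) ≤ k := by exact_mod_cast hk
  have hnr : (n : ℝ) + 1 ≤ 2 * k := by exact_mod_cast hn
  have hd : 0.6622 * k + 0.1689 ≤ k - n * p := by
    have := mul_le_mul (show (n : ℝ) ≤ 2 * k - 1 by linarith) hp1 hp0.le (by linarith)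
    linarith
  have hd0 : 0 < k - n * p := by norm_num at hd; linarith
  have hv : σ ^ 2 ≤ 0.1404 * (2 * k - 1) := by
    rw [hs2, mul_assoc, mul_comm (0.1404 : ℝ)]
    exact mul_le_mul (by linarith) (mul_one_sub_le hp1) (by positivity) (by linarith)
  have h1 := one_sub_sum_binPMF_mul_le (n := n) (k := k) (by omega) hp (by linarith)
  rw [← hs2] at h1
  set D := (k : ℝ) - n * p
  have h2 : Phi (D / σ) - ∑ i ∈ Finset.range k, binPMF n p i ≤
      1 - ∑ i ∈ Finset.range k, binPMF n p i := by linarith [Phi_le_one (D / σ)]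
  have hσ : σ ≤ 0.625 * σ ^ 2 + 0.4 := by norm_num; nlinarith [sq_nonneg (σ - 4 / 5)]
  have h4 : σ * σ ^ 2 ≤ 0.2945 * D ^ 2 := by
    have hD2 : (0.6622 * k + 0.1689) ^ 2 ≤ D ^ 2 := pow_le_pow_left₀ (by positivity) hd 2
    have h5 := mul_le_mul_of_nonneg_left hσ (sq_nonneg σ)
    have h6 : σ ^ 2 * (0.625 * σ ^ 2 + 0.4) ≤
        0.1404 * (2 * k - 1) * (0.625 * (0.1404 * (2 * k - 1)) + 0.4) := by
      refine mul_le_mul hv (by linarith) (by positivity) ?_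
      nlinarith [sq_nonneg σ]
    norm_num at h5 h6 hD2 ⊢
    nlinarith
  refine (mul_le_mul_of_nonneg_left h2 hs.le).trans ?_
  have h7 := mul_le_mul_of_nonneg_left h1 hs.le
  have h8 : σ * (1 - ∑ i ∈ Finset.range k, binPMF n p i) * D ^ 2 ≤ 0.2945 * D ^ 2 := by linarith
  exact le_of_mul_le_mul_right h8 (by positivity)

lemma standardized_sq {n : ℕ} (hn : 1 ≤ n) {w p : ℝ} (hp : p ∈ Ioo (0 : ℝ) 1) :
    ((n * w - n * p) / √(n * p * (1 - p))) ^ 2 = n * (w - p) ^ 2 / (p * (1 - p)) := by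
  have hp0 := hp.1
  have hq0 := sub_pos.2 hp.2
  have hn0 : (0 : ℝ) < n := by positivity
  rw [div_pow, Real.sq_sqrt (by positivity)]
  field_simp

lemma standardized_sub_signedRoot_le {n : ℕ} (hn : 1 ≤ n) {w p : ℝ} (hw : w ≤ 1 / 2)
    (hp0 : 0 < p) (hpw : p ≤ w) :
    (n * w - n * p) / √(n * p * (1 - p)) - signedRoot n w p ≤
      signedRoot n w p ^ 2 / (2 * √(n * p * (1 - p))) := by
  have hp : p ∈ Ioo (0 : ℝ) 1 := ⟨hp0, by linarith⟩
  have hq0 := sub_pos.2 hp.2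
  have hn0 : (0 : ℝ) < n := by positivity
  have hs := std_dev_pos hn hp
  have hs2 : √(n * p * (1 - p)) ^ 2 = n * p * (1 - p) := Real.sq_sqrt (by positivity)
  have hg0 : 0 ≤ signedRoot n w p := by rw [signedRoot, if_pos hpw]; exact Real.sqrt_nonneg _
  have hg2 := signedRoot_sq hn0.le (show w ∈ Ioo (0 : ℝ) 1 from ⟨by linarith, by linarith⟩) hp
  have ht2 := standardized_sq (w := w) hn hp
  have hc := mul_le_mul_of_nonneg_left (cubic_le_bernKL (by linarith) hp0 hpw)
    (show (0 : ℝ) ≤ 2 * n by positivity)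
  rw [← hg2] at hc
  set σ := √(n * p * (1 - p))
  set g := signedRoot n w p
  set t := (n * w - n * p) / σ with ht
  have hd : 0 ≤ w - p := by linarith
  have ht0 : 0 ≤ t := by
    rw [ht, ← mul_sub]; positivity
  have hwp : 0 < w + p := by linarith
  have key : t ^ 2 ≤ g ^ 2 * (1 + (1 - p) * (w - p) / (2 * p)) := by
    refine le_trans ?_ (mul_le_mul_of_nonneg_right hc (by positivity))
    rw [ht2, ← sub_nonneg]
    have : 2 * n * ((w - p) ^ 2 * (2 + w - p) / (2 * ((1 - p) * (w + p)))) *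
        (1 + (1 - p) * (w - p) / (2 * p)) - n * (w - p) ^ 2 / (p * (1 - p)) =
        n * (w - p) ^ 4 / (2 * p * (w + p)) := by
      field_simp; ring
    rw [this]
    positivity
  have e1 : (1 - p) * (w - p) / (2 * p) = (1 - p) ^ 2 * t / (2 * σ) := by
    rw [ht, mul_div_assoc', div_div, show σ * (2 * σ) = 2 * σ ^ 2 by ring, hs2]
    field_simp
  have h1 : (t - g) * (t + g) ≤ g ^ 2 / (2 * σ) * (t + g) := by
    have h2 : g ^ 2 * ((1 - p) ^ 2 * t / (2 * σ)) ≤ g ^ 2 / (2 * σ) * (t + g) := by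
      have : g ^ 2 * ((1 - p) ^ 2 * t / (2 * σ)) = g ^ 2 / (2 * σ) * ((1 - p) ^ 2 * t) := by ring
      rw [this]
      refine mul_le_mul_of_nonneg_left ?_ (by positivity)
      have : (1 - p) ^ 2 ≤ 1 := by nlinarith
      nlinarith
    rw [e1] at key
    nlinarith
  rcases (add_nonneg ht0 hg0).eq_or_lt with h | h
  · have : 0 ≤ g ^ 2 / (2 * σ) := by positivity
    linarith
  · exact le_of_mul_le_mul_right h1 h

lemma standardized_sub_signedRoot_le_of_lt {n : ℕ} (hn : 1 ≤ n) {w p : ℝ} (hw0 : 0 < w)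
    (hp : p < 1) (hpw : w < p) :
    (n * w - n * p) / √(n * p * (1 - p)) - signedRoot n w p ≤
      (1 - p) * ((n * p - n * w) ^ 2 / (2 * (n * p + n * w))) / √(n * p * (1 - p)) := by
  have hp0 : 0 < p := by linarith
  have hq0 := sub_pos.2 hp
  have hn0 : (0 : ℝ) < n := by positivity
  have hs := std_dev_pos hn ⟨hp0, hp⟩
  have hs2 : √(n * p * (1 - p)) ^ 2 = n * p * (1 - p) := Real.sq_sqrt (by positivity)
  have hg2 := signedRoot_sq hn0.le (show w ∈ Ioo (0 : ℝ) 1 from ⟨by linarith, by linarith⟩)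
    ⟨hp0, hp⟩
  have ht2 := standardized_sq (w := w) hn ⟨hp0, hp⟩
  have hc := mul_le_mul_of_nonneg_left (bernKL_le_cubic hw0 hp hpw.le)
    (show (0 : ℝ) ≤ 2 * n by positivity)
  rw [← hg2] at hc
  set σ := √(n * p * (1 - p))
  set g := signedRoot n w p
  set t := (n * w - n * p) / σ with ht
  set r := (1 - p) * ((n * p - n * w) ^ 2 / (2 * (n * p + n * w))) / σ with hr
  have hr0 : 0 ≤ r := by positivity
  have ht0 : t ≤ 0 := by
    rw [ht, ← mul_sub]
    exact div_nonpos_of_nonpos_of_nonneg (mul_nonpos_of_nonneg_of_nonpos hn0.le (by linarith)) hs.le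
  have e : t * r = -(n * (p - w) ^ 3 / (2 * p * (w + p))) := by
    rw [ht, hr, div_mul_div_comm, ← sq, hs2]
    field_simp
    ring
  have h1 : (-g) ^ 2 ≤ (r - t) ^ 2 := by
    rw [neg_sq]
    refine hc.trans ?_
    rw [show (r - t) ^ 2 = t ^ 2 + r ^ 2 - 2 * (t * r) by ring, ht2, e]
    have : 2 * n * ((w - p) ^ 2 * (2 + w - p) / (2 * ((1 - p) * (w + p)))) =
        n * (w - p) ^ 2 / (p * (1 - p)) - 2 * -(n * (p - w) ^ 3 / (2 * p * (w + p))) := by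
      field_simp; ring
    rw [this]
    nlinarith [sq_nonneg r]
  have h2 := abs_le_of_sq_le_sq h1 (by linarith)
  linarith [(le_abs_self (-g)).trans h2]

lemma Phi_sub_Phi_signedRoot_le {n : ℕ} (hn : 1 ≤ n) {w p : ℝ} (hw : w ≤ 1 / 2) (hp0 : 0 < p)
    (hpw : p ≤ w) :
    √(n * p * (1 - p)) * (Phi ((n * w + 1 / 2 - n * p) / √(n * p * (1 - p))) -
      Phi (signedRoot n w p)) ≤ 0.2421 := by
  have hp : p ∈ Ioo (0 : ℝ) 1 := ⟨hp0, by linarith⟩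
  have hs := std_dev_pos hn hp
  have hg0 : 0 ≤ signedRoot n w p := by rw [signedRoot, if_pos hpw]; exact Real.sqrt_nonneg _
  have h1 := standardized_sub_signedRoot_le hn hw hp0 hpw
  have h2 := signedRoot_le_standardized hn (by linarith) hw hp0 (by linarith)
  set σ := √(n * p * (1 - p))
  set g := signedRoot n w p
  have e1 : (n * w + 1 / 2 - n * p) / σ = (n * w - n * p) / σ + 1 / (2 * σ) := by field_simp; ring
  rw [e1]
  set z := (n * w - n * p) / σ + 1 / (2 * σ) with hz
  have hσ : 0 < 1 / (2 * σ) := by positivity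
  have hgz : g ≤ z := by linarith
  have h3 := Phi_sub_le_of_density_le hgz (m := gaussDensity g) fun x hx =>
    gaussDensity_le (pow_le_pow_left₀ hg0 hx.1 2)
  have h4 : z - g ≤ (1 + g ^ 2) / (2 * σ) := by rw [add_div]; linarith
  have h5 := exp_neg_mul_le (1 / 2) (g ^ 2 / 2)
  have h6 := exp_neg_half_lt
  have h7 := gaussDensity_pos 0
  have h8 := gaussDensity_zero_bounds.2
  calc _ ≤ σ * (gaussDensity g * ((1 + g ^ 2) / (2 * σ))) := by
        refine mul_le_mul_of_nonneg_left (h3.trans ?_) hs.le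
        exact mul_le_mul_of_nonneg_left h4 (gaussDensity_pos g).le
    _ = gaussDensity 0 * (Real.exp (-(g ^ 2 / 2)) * (1 + g ^ 2 / 2 - 1 / 2)) := by
        rw [gaussDensity_eq g, neg_div]; field_simp; ring
    _ ≤ gaussDensity 0 * 0.6066 := mul_le_mul_of_nonneg_left (by linarith) h7.le
    _ ≤ _ := by norm_num at h8 ⊢; linarith

lemma Phi_sub_Phi_signedRoot_le_of_lt {n : ℕ} (hn : 1 ≤ n) {w p : ℝ} (hw : 1 / 2 ≤ n * w)
    (hp : p ≤ 1 / 2) (hpw : w < p) (hd : n * p ≤ n * w + 1 / 2) :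
    √(n * p * (1 - p)) * (Phi ((n * w + 1 / 2 - n * p) / √(n * p * (1 - p))) -
      Phi (signedRoot n w p)) ≤ 0.2421 := by
  have hn0 : (0 : ℝ) < n := by positivity
  have hw0 : 0 < w := by
    by_contra h
    nlinarith
  have hp0 : 0 < p := by linarith
  have hq : 0 < 1 - p := by linarith
  have hs := std_dev_pos hn ⟨hp0, by linarith⟩
  have h1 := standardized_sub_signedRoot_le_of_lt hn hw0 (by linarith) hpw
  have h2 := signedRoot_le_standardized hn hw0 (by linarith) hp0 hp
  set σ := √(n * p * (1 - p))
  set g := signedRoot n w p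
  have e1 : (n * w + 1 / 2 - n * p) / σ = (n * w - n * p) / σ + 1 / (2 * σ) := by field_simp; ring
  rw [e1]
  set z := (n * w - n * p) / σ + 1 / (2 * σ) with hz
  have hσ : 0 < 1 / (2 * σ) := by positivity
  have hnpw : n * w < n * p := mul_lt_mul_of_pos_left hpw hn0
  have hA : (n * p - n * w) ^ 2 / (2 * (n * p + n * w)) ≤ 1 / 12 := by
    rw [div_le_iff₀ (by linarith)]
    nlinarith
  have h4 : z - g ≤ 7 / 12 / σ := by
    have h5 : (1 - p) * ((n * p - n * w) ^ 2 / (2 * (n * p + n * w))) / σ ≤ 1 / 12 / σ := by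
      refine div_le_div_of_nonneg_right ?_ hs.le
      have : 0 ≤ (n * p - n * w) ^ 2 / (2 * (n * p + n * w)) :=
        div_nonneg (sq_nonneg _) (by linarith)
      nlinarith
    have e : 7 / 12 / σ = 1 / 12 / σ + 1 / (2 * σ) := by field_simp; norm_num
    linarith
  have h3 := Phi_sub_le (show g ≤ z by linarith)
  have h8 := gaussDensity_zero_bounds.2
  calc _ ≤ σ * (gaussDensity 0 * (7 / 12 / σ)) := by
        refine mul_le_mul_of_nonneg_left (h3.trans ?_) hs.le
        exact mul_le_mul_of_nonneg_left h4 (gaussDensity_pos 0).le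
    _ = gaussDensity 0 * (7 / 12) := by field_simp
    _ ≤ _ := by norm_num at h8 ⊢; linarith

lemma gap_coeff_le {d x q A V : ℝ} (hx : 1 / 2 ≤ x) (hd : 1 / 2 ≤ d) (hq : 0.8311 ≤ q)
    (hA : A = d ^ 2 / (2 * (d + 2 * x))) (hV : V = (d - 1 / 2) ^ 2 / (2 * (d + x))) :
    1 / 2 + q * A ≤ 0.945 * (q ^ 2 + q * V + V ^ 2 / 2) := by
  have h1 : 0.8311 * A ≤ 0.1345 + 0.965 * V := by
    obtain ⟨u, rfl⟩ : ∃ u, d = u + 1 / 2 := ⟨d - 1 / 2, by ring⟩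
    obtain ⟨y, rfl⟩ : ∃ y, x = y + 1 / 2 := ⟨x - 1 / 2, by ring⟩
    have hu : 0 ≤ u := by linarith
    have hy : 0 ≤ y := by linarith
    have h2 : 0.1345 + 0.965 * V - 0.8311 * A =
        (0.1345 * (2 * u + 3 + 4 * y) * (u + 1 + y) + 0.4825 * u ^ 2 * (2 * u + 3 + 4 * y)
          - 0.8311 * (u + 1 / 2) ^ 2 * (u + 1 + y)) / ((2 * u + 3 + 4 * y) * (u + 1 + y)) := by
      rw [hA, hV]
      have e1 : 2 * (u + 1 / 2 + 2 * (y + 1 / 2)) = 2 * u + 3 + 4 * y := by ring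
      have e2 : u + 1 / 2 + (y + 1 / 2) = u + 1 + y := by ring
      rw [e1, e2]
      field_simp
      ring
    have h3 : 0 ≤ 0.1345 * (2 * u + 3 + 4 * y) * (u + 1 + y) +
        0.4825 * u ^ 2 * (2 * u + 3 + 4 * y) - 0.8311 * (u + 1 / 2) ^ 2 * (u + 1 + y) := by
      have h4 : 0 ≤ u * (u - 0.85) ^ 2 := by positivity
      have h5 : 0 ≤ u ^ 2 * y := by positivity
      have h6 : 0 ≤ u * y := by positivity
      norm_num at h4 ⊢
      nlinarith [sq_nonneg (u - 0.85), sq_nonneg y, mul_nonneg hy (sq_nonneg (u - 1))]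
    have h4 := div_nonneg h3 (show 0 ≤ (2 * u + 3 + 4 * y) * (u + 1 + y) by positivity)
    linarith
  have h2 := mul_le_mul_of_nonneg_left h1 (show 0 ≤ q by norm_num at hq; linarith)
  norm_num at h2 hq ⊢
  nlinarith [sq_nonneg (V - 0.2287 * q), mul_nonneg (sub_nonneg.2 hq) (sub_nonneg.2 hq)]

lemma one_le_exp_neg_mul {v : ℝ} (hv : 0 ≤ v) : Real.exp (-v) * (1 + v + v ^ 2 / 2) ≤ 1 := by
  have h := mul_le_mul_of_nonneg_left (Real.quadratic_le_exp_of_nonneg hv) (Real.exp_pos (-v)).le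
  rwa [← Real.exp_add, neg_add_cancel, Real.exp_zero] at h

lemma Phi_sub_Phi_signedRoot_le_of_le {n : ℕ} (hn : 1 ≤ n) {w p : ℝ} (hw : 1 / 2 ≤ n * w)
    (hp : p ≤ 0.1689) (hd : n * w + 1 / 2 ≤ n * p) :
    √(n * p * (1 - p)) * (Phi ((n * w + 1 / 2 - n * p) / √(n * p * (1 - p))) -
      Phi (signedRoot n w p)) ≤ 0.4095 * (p ^ 2 + (1 - p) ^ 2) - 0.064 * 0.457 := by
  norm_num at hp
  have hn0 : (0 : ℝ) < n := by positivity
  have hpw : w < p := lt_of_mul_lt_mul_left (by linarith : (n : ℝ) * w < n * p) hn0.le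
  have hw0 : 0 < w := by
    by_contra h
    nlinarith
  have hp0 : 0 < p := by linarith
  have hq : 0 < 1 - p := by linarith
  have hs := std_dev_pos hn ⟨hp0, by linarith⟩
  have hs2 : √(n * p * (1 - p)) ^ 2 = n * p * (1 - p) := Real.sq_sqrt (by positivity)
  have h1 := standardized_sub_signedRoot_le_of_lt hn hw0 (by linarith) hpw
  have h2 := signedRoot_le_standardized hn hw0 (by linarith) hp0 (by linarith)
  set σ := √(n * p * (1 - p))
  set g := signedRoot n w p
  have e1 : (n * w + 1 / 2 - n * p) / σ = (n * w - n * p) / σ + 1 / (2 * σ) := by field_simp; ring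
  set z := (n * w + 1 / 2 - n * p) / σ with hz
  have hσ : 0 < 1 / (2 * σ) := by positivity
  have hz0 : z ≤ 0 := div_nonpos_of_nonpos_of_nonneg (by linarith) hs.le
  obtain ⟨A, hA⟩ : ∃ A, A = (n * p - n * w) ^ 2 / (2 * (n * p + n * w)) := ⟨_, rfl⟩
  obtain ⟨V, hV⟩ : ∃ V, V = (n * p - n * w - 1 / 2) ^ 2 / (2 * (n * p)) := ⟨_, rfl⟩
  have hV0 : 0 ≤ V := by rw [hV]; positivity
  have hz2 : z ^ 2 / 2 = V / (1 - p) := by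
    rw [hz, hV, div_pow, hs2]
    field_simp
    ring
  have hcoef := gap_coeff_le (d := n * p - n * w) (x := n * w) (q := 1 - p) (A := A) (V := V) hw
    (by linarith) (by norm_num; linarith) (by rw [hA]; ring_nf) (by rw [hV]; ring_nf)
  rw [← hA] at h1
  have h4 : z - g ≤ (1 / 2 + (1 - p) * A) / σ := by
    have : (1 / 2 + (1 - p) * A) / σ = (1 - p) * A / σ + 1 / (2 * σ) := by field_simp; ring
    rw [this, e1]; linarith
  have h3 := Phi_sub_le_of_density_le (show g ≤ z by linarith) (m := gaussDensity z) fun x hx =>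
    gaussDensity_le (by nlinarith [hx.2])
  have h5 := one_le_exp_neg_mul (div_nonneg hV0 hq.le)
  have h6 : Real.exp (-(V / (1 - p))) * (1 / 2 + (1 - p) * A) ≤ 0.945 * (1 - p) ^ 2 := by
    refine (mul_le_mul_of_nonneg_left hcoef (Real.exp_pos _).le).trans ?_
    have h7 := mul_le_mul_of_nonneg_left h5 (show 0 ≤ 0.945 * (1 - p) ^ 2 by positivity)
    calc _ = _ := by field_simp
      _ ≤ _ := h7
      _ = _ := by ring
  have h8 := gaussDensity_zero_bounds.2
  calc _ ≤ σ * (gaussDensity z * ((1 / 2 + (1 - p) * A) / σ)) := by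
        refine mul_le_mul_of_nonneg_left (h3.trans ?_) hs.le
        exact mul_le_mul_of_nonneg_left h4 (gaussDensity_pos z).le
    _ = gaussDensity 0 * (Real.exp (-(V / (1 - p))) * (1 / 2 + (1 - p) * A)) := by
        rw [gaussDensity_eq z, neg_div, hz2]; field_simp
    _ ≤ gaussDensity 0 * (0.945 * (1 - p) ^ 2) :=
        mul_le_mul_of_nonneg_left h6 (gaussDensity_pos 0).le
    _ ≤ 0.39895 * (0.945 * (1 - p) ^ 2) :=
        mul_le_mul_of_nonneg_right h8.le (by positivity)
    _ ≤ _ := by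
        norm_num
        nlinarith [sq_nonneg (1 - p - 0.9265)]

lemma mul_Phi_signedRoot_le {n k : ℕ} (hk : 1 ≤ k) (hn : 2 * k ≤ n) {η ε : ℝ}
    (hη : η ∈ Ioo (0 : ℝ) 1)
    (hc : RatioCond (1 / 2) η (1 - (k - 1 / 2) / n))
    (hr : (1 - ε) * (η * (n - k + 1 / 2) * k) ≤ ε * ((1 - η) * (n - k) * (k - 1 / 2)))
    {p : ℝ} (hp : p ∈ Ioo (0 : ℝ) 1) :
    √(n * p * (1 - p)) * Phi (signedRoot n ((k - 1 / 2) / n) p) ≤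
      √(n * p * (1 - p)) * ∑ i ∈ Finset.range k, binPMF n p i + ε * 0.457 := by
  obtain ⟨a, rfl⟩ := Nat.exists_eq_add_of_le' hk
  obtain ⟨b, hb⟩ := Nat.exists_eq_add_of_le (show a + 1 + 1 ≤ n by omega)
  have hnr : (n : ℝ) = a + 1 + b + 1 := by rw [hb]; push_cast; ring
  have hn0 : (0 : ℝ) < n := by rw [hnr]; positivity
  have ha0 : (0 : ℝ) ≤ a := by positivity
  have hb0 : (0 : ℝ) ≤ b := by positivity
  have hs := std_dev_pos (n := n) (by omega) hp
  push_cast at hr hc ⊢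
  obtain ⟨w, hw⟩ : ∃ w : ℝ, w = (a + 1 - 1 / 2) / n := ⟨_, rfl⟩
  rw [← hw] at hc ⊢
  have hnw : (n : ℝ) * w = a + 1 - 1 / 2 := by rw [hw]; field_simp
  have hq : (n : ℝ) * (1 - w) = b + 3 / 2 := by rw [mul_sub, hnw, hnr]; ring
  have hw0 : 0 < w := by rw [hw]; exact div_pos (by linarith) hn0
  have hw1 : 0 < 1 - w := pos_of_mul_pos_right (by rw [hq]; positivity) hn0.le
  have hη0 := hη.1
  have hη1 : 0 < 1 - η := sub_pos.2 hη.2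
  set A : ℝ := (1 - η) * (b + 1) * w with hA
  set B : ℝ := η * (1 - w) * (a + 1) with hB
  have hA0 : 0 < A := by positivity
  have hB0 : 0 < B := by positivity
  have he : B / (A + B) ≤ ε := by
    rw [div_le_iff₀ (by positivity)]
    have h1 : n * A = (1 - η) * (n - (a + 1)) * (a + 1 - 1 / 2) := by
      rw [hA, ← hnw, hnr]; ring
    have h2 : n * B = η * (n - (a + 1) + 1 / 2) * (a + 1) := by
      rw [show (n : ℝ) - (a + 1) + 1 / 2 = n * (1 - w) by rw [hq, hnr]; ring, hB]; ring
    rw [← h1, ← h2] at hr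
    have : n * ((1 - ε) * B) ≤ n * (ε * A) := by linarith
    linarith [le_of_mul_le_mul_left this hn0]
  have h := Phi_signedRoot_le (η := η) (w := w) (e := B / (A + B)) (n := n) (k := a) (m := b) hη
    (by omega) hnw (by positivity) (by rw [div_lt_one (by positivity)]; linarith)
    (by rw [← hA, ← hB]; field_simp; ring) hc hp
  have h5 := sqrt_mul_binPMF_le (n := n) (k := a + 1) (m := b + 1) (by omega) (by omega)
    (by omega) hp
  set σ := √(n * p * (1 - p))
  have h6 : 0 ≤ σ * binPMF n p (a + 1) := mul_nonneg hs.le (binPMF_nonneg hp)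
  calc _ ≤ _ := mul_le_mul_of_nonneg_left h hs.le
    _ = σ * ∑ i ∈ Finset.range (a + 1), binPMF n p i + B / (A + B) * (σ * binPMF n p (a + 1)) := by
        ring
    _ ≤ _ := by
        have := mul_le_mul he h5 h6 (le_trans (by positivity) he)
        linarith

lemma lower_deviation_le_of_le_half {n k : ℕ} (hk : 1 ≤ k) (hn : 2 * k ≤ n) {p : ℝ}
    (hp0 : 0 < p) (hp1 : p ≤ 0.1689) :
    √(n * p * (1 - p)) * (Phi ((k - n * p) / √(n * p * (1 - p))) -
      ∑ i ∈ Finset.range k, binPMF n p i) ≤ 0.4095 * (p ^ 2 + (1 - p) ^ 2) := by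
  have hp : p ∈ Ioo (0 : ℝ) 1 := ⟨hp0, by norm_num at hp1; linarith⟩
  have hkr : (1 : ℝ) ≤ k := by exact_mod_cast hk
  have hnr : 2 * (k : ℝ) ≤ n := by exact_mod_cast hn
  have hn0 : (0 : ℝ) < n := by linarith
  have hc := sq_add_sq_ge hp1
  obtain ⟨w, hw⟩ : ∃ w : ℝ, w = (k - 1 / 2) / n := ⟨_, rfl⟩
  have hnw : (n : ℝ) * w = k - 1 / 2 := by rw [hw]; field_simp
  have hw0 : 0 < w := by rw [hw]; exact div_pos (by linarith) hn0
  have hw2 : w ≤ 1 / 2 := by rw [hw, div_le_iff₀ hn0]; linarith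
  have e1 : (k : ℝ) - n * p = n * w + 1 / 2 - n * p := by rw [hnw]; ring
  rw [e1]
  rcases le_total (n * w + 1 / 2) (n * p) with h | h
  · have h1 := Phi_sub_Phi_signedRoot_le_of_le (n := n) (by omega) (w := w) (by linarith) hp1 h
    have hkn : (k : ℝ) ≤ 0.1689 * n := by
      have := mul_le_mul_of_nonneg_left hp1 hn0.le
      linarith
    have hw4 : w ≤ 1 / 4 := by
      rw [hw, div_le_iff₀ hn0]; norm_num at hkn; linarith
    have hr : (1 - 0.064 : ℝ) * (3 / 100 * (n - k + 1 / 2) * k) ≤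
        0.064 * ((1 - 3 / 100) * (n - k) * (k - 1 / 2)) := by
      norm_num at hkn ⊢
      rcases hk.eq_or_lt with rfl | hk2
      · have : (6 : ℝ) ≤ n := by
          have : 5 < n := by
            by_contra hcon
            have : (n : ℝ) ≤ 5 := by exact_mod_cast (by omega : n ≤ 5)
            norm_num at hkn; linarith
          exact_mod_cast this
        norm_num
        linarith
      · have : (2 : ℝ) ≤ k := by exact_mod_cast hk2
        nlinarith
    have h2 := mul_Phi_signedRoot_le hk hn (η := 3 / 100) (ε := 0.064) (by norm_num)
      (by rw [← hw]; exact ratioCond_half' (by linarith) (by linarith)) hr hp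
    rw [← hw] at h2
    norm_num at h1 h2 ⊢
    linarith
  · have h1 : √(n * p * (1 - p)) * (Phi ((n * w + 1 / 2 - n * p) / √(n * p * (1 - p))) -
        Phi (signedRoot n w p)) ≤ 0.2421 := by
      rcases le_or_gt p w with hpw | hpw
      · exact Phi_sub_Phi_signedRoot_le (by omega) hw2 hp0 hpw
      · exact Phi_sub_Phi_signedRoot_le_of_lt (by omega) (by linarith)
          (by norm_num at hp1; linarith) hpw h
    have h2 : √(n * p * (1 - p)) * Phi (signedRoot n ((k - 1 / 2) / n) p) ≤
        √(n * p * (1 - p)) * ∑ i ∈ Finset.range k, binPMF n p i + 0.097 * 0.457 := by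
      rcases hk.eq_or_lt with rfl | hk2
      · refine mul_Phi_signedRoot_le hk hn (η := 3 / 100) (by norm_num)
          (by rw [← hw]; refine ratioCond_half' ?_ (by linarith)
              have : w ≤ 1 / 4 := by rw [hw, div_le_iff₀ hn0]; push_cast at hnr ⊢; linarith
              linarith) ?_ hp
        push_cast at hnr ⊢; norm_num; linarith
      · have : (2 : ℝ) ≤ k := by exact_mod_cast hk2
        refine mul_Phi_signedRoot_le hk hn (η := 3 / 50) (by norm_num)
          (by rw [← hw]; exact ratioCond_half (by linarith) (by linarith)) ?_ hp
        norm_num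
        nlinarith
    rw [← hw] at h2
    norm_num at h1 h2 hc ⊢
    linarith

lemma upper_deviation_le {n k : ℕ} (hn : 1 ≤ n) (hkn : k ≤ n) {p : ℝ} (hp0 : 0 < p)
    (hp1 : p ≤ 0.1689) :
    √(n * p * (1 - p)) * (binLE n p k - Phi ((k - n * p) / √(n * p * (1 - p)))) ≤
      0.4095 * (p ^ 2 + (1 - p) ^ 2) := by
  rcases k.eq_zero_or_pos with rfl | hk
  · simpa using upper_deviation_zero_le hn hp0 hp1
  · rcases Nat.lt_or_ge (2 * k + 1) n with h | h
    · exact upper_deviation_le_of_le_half hk h hp0 hp1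
    · exact upper_deviation_le_of_half_le hk hkn h hp0 hp1

lemma lower_deviation_le {n k : ℕ} (hn : 1 ≤ n) (hkn : k ≤ n) {p : ℝ} (hp0 : 0 < p)
    (hp1 : p ≤ 0.1689) :
    √(n * p * (1 - p)) * (Phi ((k - n * p) / √(n * p * (1 - p))) -
      ∑ i ∈ Finset.range k, binPMF n p i) ≤ 0.4095 * (p ^ 2 + (1 - p) ^ 2) := by
  rcases k.eq_zero_or_pos with rfl | hk
  · simpa using lower_deviation_zero_le hn hp0 hp1
  · rcases Nat.lt_or_ge n (2 * k) with h | h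
    · exact lower_deviation_le_of_half_le hk hkn h hp0 hp1
    · exact lower_deviation_le_of_le_half hk h hp0 hp1

lemma binomCDF_eq_sum (n : ℕ) (p x : ℝ) :
    binomCDF n p x = ∑ i ∈ Finset.range (min ⌈x⌉₊ (n + 1)), binPMF n p i := by
  rw [binomCDF, ← Finset.sum_filter]
  refine Finset.sum_congr ?_ fun i _ => rfl
  ext i
  simp only [Finset.mem_filter, Finset.mem_range, lt_min_iff, Nat.lt_ceil]
  tauto

lemma mul_abs_binomCDF_sub_Phi_le {n : ℕ} (hn : 1 ≤ n) {p : ℝ} (hp0 : 0 < p) (hp1 : p ≤ 0.1689)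
    (x : ℝ) : √(n * p * (1 - p)) *
      |binomCDF n p x - Phi ((x - n * p) / √(n * p * (1 - p)))| ≤
      0.4095 * (p ^ 2 + (1 - p) ^ 2) := by
  have hp : p ∈ Ioo (0 : ℝ) 1 := ⟨hp0, by norm_num at hp1; linarith⟩
  have hs := std_dev_pos hn hp
  have hupper := fun k (hk : k ≤ n) => upper_deviation_le hn hk hp0 hp1
  have hlower := fun k (hk : k ≤ n) => lower_deviation_le hn hk hp0 hp1
  have hc := sq_add_sq_ge hp1
  set σ := √(n * p * (1 - p))
  have hmono : ∀ {a b : ℝ}, a ≤ b → Phi ((a - n * p) / σ) ≤ Phi ((b - n * p) / σ) := fun h =>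
    Phi_mono (div_le_div_of_nonneg_right (by linarith) hs.le)
  rw [← abs_of_pos hs, ← abs_mul, abs_of_pos hs, abs_le', ← mul_neg, neg_sub]
  rw [binomCDF_eq_sum]
  constructor
  · obtain h | h := (min ⌈x⌉₊ (n + 1)).eq_zero_or_pos
    · rw [h, Finset.sum_range_zero]
      have := mul_nonneg hs.le (Phi_nonneg ((x - n * p) / σ))
      norm_num at hc ⊢
      linarith
    · obtain ⟨k, hk⟩ := Nat.exists_eq_add_of_le' h
      have hkn : k ≤ n := by omega
      have hkx : (k : ℝ) < x := Nat.lt_ceil.1 (by omega)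
      rw [hk]
      refine le_trans (mul_le_mul_of_nonneg_left ?_ hs.le) (hupper k hkn)
      rw [binLE]
      linarith [hmono hkx.le]
  · rcases le_or_gt ⌈x⌉₊ n with h | h
    · rw [min_eq_left (by omega)]
      refine le_trans (mul_le_mul_of_nonneg_left ?_ hs.le) (hlower _ h)
      linarith [hmono (Nat.le_ceil x)]
    · rw [min_eq_right (by omega), sum_binPMF]
      have := mul_nonneg hs.le (sub_nonneg.2 (Phi_le_one ((x - n * p) / σ)))
      norm_num at hc ⊢
      linarith

/-- If `0 < p ≤ 0.1689`, then for all `n ≥ 1`, `T_n(p) < 0.4096`. -/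
theorem T_lt_of_p_small (p : ℝ) (hp0 : 0 < p) (hp1 : p ≤ 0.1689)
    (n : ℕ) (hn : 1 ≤ n) :
    T n p < 0.4096 := by
  have hp : p ∈ Ioo (0 : ℝ) 1 := ⟨hp0, by norm_num at hp1; linarith⟩
  have hq0 := sub_pos.2 hp.2
  have hs := std_dev_pos hn hp
  have hc : 0 < p ^ 2 + (1 - p) ^ 2 := by positivity
  have h1 : Delta n p ≤ 0.4095 * (p ^ 2 + (1 - p) ^ 2) / √(n * p * (1 - p)) := by
    refine ciSup_le fun x => ?_
    rw [le_div_iff₀ hs, mul_comm]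
    exact mul_abs_binomCDF_sub_Phi_le hn hp0 hp1 x
  have h2 : T n p = √(n * p * (1 - p)) * Delta n p / (p ^ 2 + (1 - p) ^ 2) := by
    rw [T, rho, mul_assoc, Real.sqrt_mul (Nat.cast_nonneg n), div_div_eq_mul_div]
    ring
  rw [h2, div_lt_iff₀ hc]
  rw [le_div_iff₀ hs] at h1
  norm_num at h1 ⊢
  linarith
end

section
/- Let 0 < p < 1, q = 1 − p, n ≥ 1 an integer, 0 ≤ k ≤ n, σ = √(npq), and δ_n(k,p) = C(n,k) p^k q^{n−k} − (1/σ) φ((k − np)/σ), where φ(x) = (1/√(2π)) e^{−x²/2}. Then |δ_n(k,p)| < min{ 1/(σ√(2e)), 0.516/σ² }. -/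
/-- The standard normal density `φ(x) = (1/√(2π)) e^{−x²/2}`. -/
noncomputable def phi (x : ℝ) : ℝ :=
  (Real.sqrt (2 * Real.pi))⁻¹ * Real.exp (-x ^ 2 / 2)

/-- The ratio of consecutive values of `(2k+1)^(2k+1) / (k!)²` is monotone, in logarithmic form. -/
theorem log_ratio_mono {x y : ℝ} (hx : 0 ≤ x) (hxy : x ≤ y) :
    (2 * x + 3) * Real.log (2 * x + 3) - (2 * x + 1) * Real.log (2 * x + 1)
        - 2 * Real.log (x + 1) ≤
      (2 * y + 3) * Real.log (2 * y + 3) - (2 * y + 1) * Real.log (2 * y + 1)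
        - 2 * Real.log (y + 1) := by
  have hd : ∀ z : ℝ, 0 ≤ z → HasDerivAt (fun z : ℝ =>
      (2 * z + 3) * Real.log (2 * z + 3) - (2 * z + 1) * Real.log (2 * z + 1)
        - 2 * Real.log (z + 1))
      (2 * Real.log (2 * z + 3) - 2 * Real.log (2 * z + 1) - 2 / (z + 1)) z := by
    intro z hz
    have h3 : HasDerivAt (fun z : ℝ => 2 * z + 3) 2 z := by
      simpa using ((hasDerivAt_id z).const_mul 2).add_const 3
    have h1 : HasDerivAt (fun z : ℝ => 2 * z + 1) 2 z := by
      simpa using ((hasDerivAt_id z).const_mul 2).add_const 1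
    have h0 : HasDerivAt (fun z : ℝ => z + 1) 1 z := (hasDerivAt_id z).add_const 1
    have e3 : 2 * z + 3 ≠ 0 := by positivity
    have e1 : 2 * z + 1 ≠ 0 := by positivity
    have e0 : z + 1 ≠ 0 := by positivity
    convert! ((h3.mul (h3.log e3)).sub (h1.mul (h1.log e1))).sub ((h0.log e0).const_mul 2) using 1
    field_simp
    ring
  refine monotoneOn_of_deriv_nonneg (convex_Ici (0 : ℝ))
    (fun z hz => (hd z hz).continuousAt.continuousWithinAt)
    (fun z hz => (hd z (interior_subset hz)).differentiableAt.differentiableWithinAt)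
    (fun z hz => ?_) hx (hx.trans hxy) hxy
  have hz : 0 ≤ z := interior_subset hz
  rw [(hd z hz).deriv]
  have h := Real.le_log_one_add_of_nonneg (x := 2 / (2 * z + 1)) (by positivity)
  rw [show 1 + 2 / (2 * z + 1) = (2 * z + 3) / (2 * z + 1) by field_simp; ring,
    Real.log_div (by positivity) (by positivity),
    show 2 * (2 / (2 * z + 1)) / (2 / (2 * z + 1) + 2) = 1 / (z + 1) by field_simp; ring] at h
  have : 2 / (z + 1) = 2 * (1 / (z + 1)) := by ring
  linarith

/-- Multiplicative form of `log_ratio_mono` at natural numbers. -/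
theorem pow_ratio_mono {a b : ℕ} (hab : a ≤ b) :
    (2 * a + 3 : ℝ) ^ (2 * a + 3) * ((2 * b + 1) ^ (2 * b + 1) * (b + 1) ^ 2) ≤
      (2 * b + 3) ^ (2 * b + 3) * ((2 * a + 1) ^ (2 * a + 1) * (a + 1) ^ 2) := by
  have h := log_ratio_mono (Nat.cast_nonneg (α := ℝ) a) (Nat.cast_le.2 hab)
  rw [← Real.log_le_log_iff (by positivity) (by positivity), Real.log_mul (by positivity)
    (by positivity), Real.log_mul (by positivity) (by positivity), Real.log_mul (by positivity)
    (by positivity), Real.log_mul (by positivity) (by positivity)]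
  simp only [Real.log_pow]
  push_cast
  linarith

/-- The product `(2k+1)^(2k+1) / (k!)² * (2m+1)^(2m+1) / (m!)²` is largest, for fixed `k + m`,
at `k = 0`. -/
theorem choose_sq_mul_pow_le (k m : ℕ) :
    ((k + m).choose k : ℝ) ^ 2 * ((2 * k + 1) ^ (2 * k + 1) * (2 * m + 1) ^ (2 * m + 1)) ≤
      (2 * (k + m : ℕ) + 1) ^ (2 * (k + m) + 1) := by
  induction k with
  | zero => simp
  | succ k ih =>
    have hR := pow_ratio_mono (Nat.le_add_right k m)
    have hc : ((k + 1 + m).choose (k + 1) : ℝ) * (k + 1) = (k + m + 1) * (k + m).choose k := by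
      have := Nat.add_one_mul_choose_eq (k + m) k
      rw [show k + 1 + m = k + m + 1 by ring]
      exact_mod_cast this.symm
    have hk : (0 : ℝ) < (2 * k + 1) ^ (2 * k + 1) * (k + 1) ^ 2 := by positivity
    rw [show 2 * (k + 1) + 1 = 2 * k + 3 by ring, show 2 * (k + 1 + m) + 1 = 2 * (k + m) + 3 by ring]
    push_cast at hR ih ⊢
    rw [show (2 * ((k : ℝ) + 1) + 1) = 2 * k + 3 by ring,
      show (2 * ((k : ℝ) + 1 + m) + 1) = 2 * (k + m) + 3 by ring]
    refine le_of_mul_le_mul_right ?_ hk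
    refine le_trans ?_ hR
    calc ((k + 1 + m).choose (k + 1) : ℝ) ^ 2 *
          ((2 * k + 3) ^ (2 * k + 3) * (2 * m + 1) ^ (2 * m + 1)) *
          ((2 * k + 1) ^ (2 * k + 1) * (k + 1) ^ 2)
        = (((k + 1 + m).choose (k + 1) : ℝ) * (k + 1)) ^ 2 * (2 * k + 3) ^ (2 * k + 3) *
          ((2 * k + 1) ^ (2 * k + 1) * (2 * m + 1) ^ (2 * m + 1)) := by ring
      _ = (2 * k + 3) ^ (2 * k + 3) * ((((k + m).choose k : ℝ) ^ 2 *
          ((2 * k + 1) ^ (2 * k + 1) * (2 * m + 1) ^ (2 * m + 1))) * (k + m + 1) ^ 2) := by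
        rw [hc]; ring
      _ ≤ _ := by gcongr

/-- Weighted AM-GM for natural exponents. -/
theorem pow_mul_pow_le {p q : ℝ} (hp : 0 ≤ p) (hq : 0 ≤ q) (hpq : p + q = 1) {a b : ℕ}
    (ha : 0 < a) (hb : 0 < b) :
    p ^ a * q ^ b * (a + b) ^ (a + b) ≤ (a : ℝ) ^ a * b ^ b := by
  have ha' : (0 : ℝ) < a := by exact_mod_cast ha
  have hb' : (0 : ℝ) < b := by exact_mod_cast hb
  have key : ∀ (x : ℝ) (c : ℕ), 0 ≤ x → x ^ c ≤ Real.exp (c * (x - 1)) := by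
    intro x c hx
    rw [Real.exp_nat_mul]
    exact pow_le_pow_left₀ hx (by linarith [Real.add_one_le_exp (x - 1)]) _
  have h := mul_le_mul (key (p * (a + b) / a) a (by positivity))
    (key (q * (a + b) / b) b (by positivity)) (by positivity) (by positivity)
  rw [← Real.exp_add, show (a : ℝ) * (p * (a + b) / a - 1) + b * (q * (a + b) / b - 1) = 0 by
    field_simp
    linear_combination ((a : ℝ) + b) * hpq, Real.exp_zero, div_pow, div_pow, div_mul_div_comm,
    div_le_one (by positivity)] at h
  calc _ = (p * (a + b)) ^ a * (q * ((a : ℝ) + b)) ^ b := by rw [mul_pow, mul_pow, pow_add]; ring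
    _ ≤ _ := h

/-- Herzog's bound for binomial probabilities, squared. -/
theorem binomial_sq_mul_lt {p : ℝ} (hp0 : 0 < p) (hp1 : p < 1) {k m : ℕ} (hn : 1 ≤ k + m) :
    (((k + m).choose k : ℝ) * p ^ k * (1 - p) ^ m) ^ 2 * ((k + m : ℕ) * p * (1 - p)) <
      1 / (2 * Real.exp 1) := by
  have hq0 : 0 < 1 - p := by linarith
  set n := k + m with hnkm
  have hn' : (1 : ℝ) ≤ n := by exact_mod_cast hn
  have hC := choose_sq_mul_pow_le k m
  have hA := pow_mul_pow_le hp0.le hq0.le (by ring) (Nat.succ_pos (2 * k)) (Nat.succ_pos (2 * m))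
  rw [← hnkm] at hC
  have hN : (0 : ℝ) < 2 * n + 2 := by positivity
  have hsum : ((2 * k).succ : ℝ) + ((2 * m).succ : ℝ) = 2 * n + 2 := by
    rw [hnkm]; push_cast; ring
  rw [hsum, show (2 * k).succ + (2 * m).succ = 2 * n + 2 by omega] at hA
  simp only [Nat.succ_eq_add_one] at hA
  push_cast at hA
  have h1 : (n.choose k : ℝ) ^ 2 * (p ^ (2 * k + 1) * (1 - p) ^ (2 * m + 1)) *
      (2 * n + 2) ^ (2 * n + 2) ≤ (2 * n + 1) ^ (2 * n + 1) := by
    calc _ = (n.choose k : ℝ) ^ 2 * (p ^ (2 * k + 1) * (1 - p) ^ (2 * m + 1) *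
          (2 * n + 2) ^ (2 * n + 2)) := by ring
      _ ≤ (n.choose k : ℝ) ^ 2 * ((2 * k + 1) ^ (2 * k + 1) * (2 * m + 1) ^ (2 * m + 1)) := by
        gcongr
      _ ≤ _ := hC
  have h2 : (2 * n + 1 : ℝ) ^ (2 * n + 2) * Real.exp 1 ≤ (2 * n + 2) ^ (2 * n + 2) := by
    have h := Real.add_one_le_exp (-(1 / (2 * n + 2 : ℝ)))
    rw [show -(1 / (2 * n + 2 : ℝ)) + 1 = (2 * n + 1) / (2 * n + 2) by field_simp; ring] at h
    have h' := pow_le_pow_left₀ (by positivity) h (2 * n + 2)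
    rw [← Real.exp_nat_mul, div_pow, div_le_iff₀ (by positivity)] at h'
    rw [show ((2 * n + 2 : ℕ) : ℝ) * -(1 / (2 * n + 2)) = -1 by push_cast; field_simp] at h'
    calc _ ≤ (Real.exp (-1) * (2 * n + 2) ^ (2 * n + 2)) * Real.exp 1 := by gcongr
      _ = (Real.exp (-1) * Real.exp 1) * (2 * n + 2) ^ (2 * n + 2) := by ring
      _ = _ := by rw [← Real.exp_add]; simp
  rw [lt_div_iff₀ (by positivity)]
  have hpos : (0 : ℝ) < (2 * n + 2) ^ (2 * n + 2) := by positivity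
  refine lt_of_mul_lt_mul_right ?_ hpos.le
  calc _ = (n.choose k : ℝ) ^ 2 * (p ^ (2 * k + 1) * (1 - p) ^ (2 * m + 1)) *
      (2 * n + 2) ^ (2 * n + 2) * (2 * n * Real.exp 1) := by ring
    _ ≤ (2 * n + 1) ^ (2 * n + 1) * (2 * n * Real.exp 1) := by gcongr
    _ < (2 * n + 1) ^ (2 * n + 1) * ((2 * n + 1) * Real.exp 1) := by
      gcongr
      linarith
    _ = (2 * n + 1) ^ (2 * n + 2) * Real.exp 1 := by ring
    _ ≤ _ := by linarith

theorem norm_exp_mul_I_sub_one_le {y : ℝ} (hy : 0 ≤ y) :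
    ‖Complex.exp (y * Complex.I) - 1‖ ≤ y := by
  have h := Real.norm_exp_I_mul_ofReal_sub_one_le (x := y)
  rw [mul_comm, Real.norm_of_nonneg hy] at h
  exact h

theorem hasDerivAt_exp_mul_I (x : ℝ) :
    HasDerivAt (fun y : ℝ => Complex.exp (y * Complex.I))
      (Complex.exp (x * Complex.I) * Complex.I) x := by
  have h : HasDerivAt (fun y : ℝ => (y : ℂ) * Complex.I) Complex.I x := by
    simpa using (Complex.ofRealCLM.hasDerivAt (x := x)).mul_const Complex.I
  exact h.cexp

theorem norm_exp_mul_I_sub_linear_le {y : ℝ} (hy : 0 ≤ y) :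
    ‖Complex.exp (y * Complex.I) - 1 - y * Complex.I‖ ≤ y ^ 2 / 2 := by
  have hd : ∀ x : ℝ, HasDerivAt (fun y : ℝ => Complex.exp (y * Complex.I) - 1 - y * Complex.I)
      (Complex.exp (x * Complex.I) * Complex.I - Complex.I) x := by
    intro x
    have h : HasDerivAt (fun y : ℝ => (y : ℂ) * Complex.I) Complex.I x := by
      simpa using (Complex.ofRealCLM.hasDerivAt (x := x)).mul_const Complex.I
    exact ((hasDerivAt_exp_mul_I x).sub_const 1).sub h
  refine image_norm_le_of_norm_deriv_right_le_deriv_boundary (a := 0) (b := y)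
    (B := fun x => x ^ 2 / 2) (B' := fun x => x)
    (fun x _ => (hd x).continuousAt.continuousWithinAt) (fun x _ => (hd x).hasDerivWithinAt)
    (by simp) (fun x => ?_) (fun x hx => ?_) ⟨hy, le_rfl⟩
  · convert! (hasDerivAt_pow 2 x).div_const 2 using 1
    simp
  · rw [← sub_one_mul, norm_mul, Complex.norm_I, mul_one]
    exact norm_exp_mul_I_sub_one_le hx.1

theorem norm_exp_mul_I_sub_quadratic_le_of_nonneg {y : ℝ} (hy : 0 ≤ y) :
    ‖Complex.exp (y * Complex.I) - 1 - y * Complex.I + y ^ 2 / 2‖ ≤ y ^ 3 / 6 := by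
  have hd : ∀ x : ℝ, HasDerivAt
      (fun y : ℝ => Complex.exp (y * Complex.I) - 1 - y * Complex.I + (y : ℂ) ^ 2 / 2)
      (Complex.exp (x * Complex.I) * Complex.I - Complex.I + x) x := by
    intro x
    have h0 := Complex.ofRealCLM.hasDerivAt (x := x)
    have h : HasDerivAt (fun y : ℝ => (y : ℂ) * Complex.I) Complex.I x := by
      simpa using h0.mul_const Complex.I
    have h2 : HasDerivAt (fun y : ℝ => (y : ℂ) ^ 2 / 2) (x : ℂ) x := by
      convert! (h0.pow 2).div_const 2 using 1
      simp
    exact (((hasDerivAt_exp_mul_I x).sub_const 1).sub h).add h2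
  refine image_norm_le_of_norm_deriv_right_le_deriv_boundary (a := 0) (b := y)
    (B := fun x => x ^ 3 / 6) (B' := fun x => x ^ 2 / 2)
    (fun x _ => (hd x).continuousAt.continuousWithinAt) (fun x _ => (hd x).hasDerivWithinAt)
    (by simp) (fun x => ?_) (fun x hx => ?_) ⟨hy, le_rfl⟩
  · convert! (hasDerivAt_pow 3 x).div_const 6 using 1
    norm_num
    ring
  · have : Complex.exp (x * Complex.I) * Complex.I - Complex.I + x =
        (Complex.exp (x * Complex.I) - 1 - x * Complex.I) * Complex.I := by
      linear_combination (x : ℂ) * Complex.I_mul_I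
    rw [this, norm_mul, Complex.norm_I, mul_one]
    exact norm_exp_mul_I_sub_linear_le hx.1

theorem norm_exp_mul_I_sub_quadratic_le (y : ℝ) :
    ‖Complex.exp (y * Complex.I) - 1 - y * Complex.I + y ^ 2 / 2‖ ≤ |y| ^ 3 / 6 := by
  rcases le_total 0 y with hy | hy
  · rw [abs_of_nonneg hy]
    exact norm_exp_mul_I_sub_quadratic_le_of_nonneg hy
  · rw [abs_of_nonpos hy]
    have h := norm_exp_mul_I_sub_quadratic_le_of_nonneg (neg_nonneg.2 hy)
    rw [← Complex.norm_conj] at h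
    convert! h using 2
    simp [← Complex.exp_conj, Complex.conj_ofNat]
    ring

/-- The characteristic function of a centred Bernoulli variable with parameter `p`. -/
noncomputable def bernoulliChar (p t : ℝ) : ℂ :=
  (1 - p : ℝ) * Complex.exp ((-(p * t) : ℝ) * Complex.I) +
    p * Complex.exp (((1 - p) * t : ℝ) * Complex.I)

theorem bernoulliChar_eq (p t : ℝ) :
    bernoulliChar p t = Complex.exp ((-(p * t) : ℝ) * Complex.I) *
      ((1 - p : ℝ) + p * Complex.exp (t * Complex.I)) := by
  rw [bernoulliChar, mul_add, mul_left_comm _ (p : ℂ), ← Complex.exp_add, mul_comm (Complex.exp _)]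
  congr 3
  push_cast
  ring_nf

theorem norm_bernoulliChar_le {p t : ℝ} (hp0 : 0 ≤ p) (hp1 : p ≤ 1) (ht : |t| ≤ Real.pi) :
    ‖bernoulliChar p t‖ ≤ Real.exp (-(p * (1 - p) * (2 / 5) * t ^ 2 / 2)) := by
  have hpq : 0 ≤ p * (1 - p) := mul_nonneg hp0 (by linarith)
  have h2 : ‖bernoulliChar p t‖ ^ 2 = 1 - 2 * (p * (1 - p)) * (1 - Real.cos t) := by
    rw [bernoulliChar_eq, norm_mul, Complex.norm_exp_ofReal_mul_I, one_mul, Complex.sq_norm,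
      Complex.normSq_apply]
    simp only [Complex.add_re, Complex.add_im, Complex.mul_re, Complex.mul_im, Complex.ofReal_re,
      Complex.ofReal_im, Complex.exp_ofReal_mul_I_re, Complex.exp_ofReal_mul_I_im]
    linear_combination p ^ 2 * Real.sin_sq_add_cos_sq t
  have hcos := Real.cos_le_one_sub_mul_cos_sq ht
  have hpi : 1 / 5 ≤ 2 / Real.pi ^ 2 := by
    rw [div_le_div_iff₀ (by norm_num) (by positivity)]
    nlinarith [Real.pi_lt_d2, Real.pi_pos]
  have hc : 1 / 5 * t ^ 2 ≤ 1 - Real.cos t := by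
    nlinarith [mul_le_mul_of_nonneg_right hpi (sq_nonneg t)]
  have h3 : ‖bernoulliChar p t‖ ^ 2 ≤ Real.exp (-(p * (1 - p) * (2 / 5) * t ^ 2 / 2)) ^ 2 := by
    rw [h2, ← Real.exp_nat_mul]
    have := Real.add_one_le_exp ((2 : ℕ) * -(p * (1 - p) * (2 / 5) * t ^ 2 / 2))
    push_cast at this ⊢
    nlinarith [mul_le_mul_of_nonneg_left hc hpq]
  exact le_of_sq_le_sq h3 (Real.exp_pos _).le

theorem norm_bernoulliChar_sub_le {p t : ℝ} (hp0 : 0 ≤ p) (hp1 : p ≤ 1) (ht : |t| ≤ Real.pi) :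
    ‖bernoulliChar p t - (Real.exp (-(p * (1 - p) * t ^ 2 / 2)) : ℝ)‖ ≤
      0.182 * (p * (1 - p)) * |t| ^ 3 := by
  have hq0 : 0 ≤ 1 - p := by linarith
  set u := p * (1 - p) with hu
  have hu0 : 0 ≤ u := mul_nonneg hp0 hq0
  have hu4 : u ≤ 1 / 4 := by nlinarith [sq_nonneg (p - 1 / 2)]
  have hA := norm_exp_mul_I_sub_quadratic_le (-(p * t))
  have hB := norm_exp_mul_I_sub_quadratic_le ((1 - p) * t)
  have hG : |Real.exp (-(u * t ^ 2 / 2)) - 1 + u * t ^ 2 / 2| ≤ (u * t ^ 2 / 2) ^ 2 / 2 := by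
    have hx : 0 ≤ u * t ^ 2 / 2 := by positivity
    rw [abs_of_nonneg (by linarith [Real.add_one_le_exp (-(u * t ^ 2 / 2))])]
    have h1 := Real.quadratic_le_exp_of_nonneg hx
    have h2 : Real.exp (-(u * t ^ 2 / 2)) ≤ 1 / (1 + u * t ^ 2 / 2 + (u * t ^ 2 / 2) ^ 2 / 2) := by
      rw [Real.exp_neg, ← one_div]
      exact one_div_le_one_div_of_le (by positivity) h1
    generalize u * t ^ 2 / 2 = x at *
    have h3 : 1 / (1 + x + x ^ 2 / 2) ≤ 1 - x + x ^ 2 / 2 := by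
      rw [div_le_iff₀ (by positivity)]
      nlinarith [pow_nonneg hx 4]
    linarith
  have hid : bernoulliChar p t - (Real.exp (-(u * t ^ 2 / 2)) : ℝ) =
      (1 - p : ℝ) * (Complex.exp ((-(p * t) : ℝ) * Complex.I) - 1 - (-(p * t) : ℝ) * Complex.I +
        ((-(p * t) : ℝ) : ℂ) ^ 2 / 2) +
      p * (Complex.exp (((1 - p) * t : ℝ) * Complex.I) - 1 - ((1 - p) * t : ℝ) * Complex.I +
        (((1 - p) * t : ℝ) : ℂ) ^ 2 / 2) -
      ((Real.exp (-(u * t ^ 2 / 2)) - 1 + u * t ^ 2 / 2 : ℝ) : ℂ) := by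
    rw [bernoulliChar, hu]
    push_cast
    ring
  rw [hid]
  refine (norm_sub_le _ _).trans ((add_le_add_left (norm_add_le _ _) _).trans ?_)
  rw [norm_mul, norm_mul, Complex.norm_real, Complex.norm_real, Complex.norm_real,
    Real.norm_of_nonneg hq0, Real.norm_of_nonneg hp0, Real.norm_eq_abs]
  rw [abs_neg, abs_mul, abs_of_nonneg hp0] at hA
  rw [abs_mul, abs_of_nonneg hq0] at hB
  have ht2 : t ^ 2 = |t| ^ 2 := (sq_abs t).symm
  have hT : |t| ≤ 3.1416 := ht.trans Real.pi_lt_d4.le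
  have hT0 := abs_nonneg t
  have h1 := mul_le_mul_of_nonneg_left hA hq0
  have h2 := mul_le_mul_of_nonneg_left hB hp0
  refine (add_le_add (add_le_add h1 h2) hG).trans ?_
  rw [ht2]
  generalize |t| = T at *
  have e : (1 - p) * ((p * T) ^ 3 / 6) + p * (((1 - p) * T) ^ 3 / 6) + (u * T ^ 2 / 2) ^ 2 / 2 =
      (u * T ^ 3) * ((1 - 2 * u) / 6 + u * T / 8) := by
    rw [hu]; ring
  rw [e]
  have h3 : (1 - 2 * u) / 6 + u * T / 8 ≤ 0.182 := by nlinarith [mul_le_mul_of_nonneg_left hT hu0]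
  calc _ ≤ (u * T ^ 3) * 0.182 := by gcongr
    _ = _ := by ring

theorem norm_pow_sub_pow_le {R : Type*} [NormedCommRing R] [NormOneClass R] (x y : R) {a b : ℝ}
    (hx : ‖x‖ ≤ a) (hy : ‖y‖ ≤ b) (n : ℕ) :
    ‖x ^ n - y ^ n‖ ≤ ‖x - y‖ * ∑ j ∈ Finset.range n, a ^ j * b ^ (n - 1 - j) := by
  rw [← (Commute.all x y).mul_geom_sum₂ n]
  refine (norm_mul_le _ _).trans (mul_le_mul_of_nonneg_left ?_ (norm_nonneg _))
  refine (norm_sum_le _ _).trans (Finset.sum_le_sum fun j _ => ?_)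
  have ha := (norm_nonneg _).trans hx
  exact (norm_mul_le _ _).trans (mul_le_mul ((norm_pow_le _ _).trans
    (pow_le_pow_left₀ (norm_nonneg _) hx _)) ((norm_pow_le _ _).trans
    (pow_le_pow_left₀ (norm_nonneg _) hy _)) (norm_nonneg _) (by positivity))

/-- A telescoping bound for the inverse squares of the decay rates
`(n - 1 - j) + 2 / 5 * j`. -/
theorem sum_inv_sq_le {n : ℕ} (hn : 6 ≤ n) :
    ∑ j ∈ Finset.range n, 1 / ((n : ℝ) - 1 - 3 / 5 * j) ^ 2 ≤
      (21 / (5 * n) : ℝ) := by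
  have hn' : (6 : ℝ) ≤ n := by exact_mod_cast hn
  let y : ℕ → ℝ := fun j => n - 7 / 10 - 3 / 5 * j
  have hy : ∀ j ≤ n, 0 < y j := by
    intro j hj
    have : (j : ℝ) ≤ n := by exact_mod_cast hj
    simp only [y]
    linarith
  calc ∑ j ∈ Finset.range n, 1 / ((n : ℝ) - 1 - 3 / 5 * j) ^ 2
      ≤ ∑ j ∈ Finset.range n, (5 / 3 * (1 / y (j + 1)) - 5 / 3 * (1 / y j)) := by
        refine Finset.sum_le_sum fun j hj => ?_
        have hj := Finset.mem_range.1 hj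
        have h1 := hy (j + 1) hj
        have h0 := hy j hj.le
        have e0 : (n : ℝ) - 1 - 3 / 5 * j = y (j + 1) + 3 / 10 := by simp only [y]; push_cast; ring
        have e1 : y j = y (j + 1) + 3 / 5 := by simp only [y]; push_cast; ring
        rw [e0, e1]
        generalize y (j + 1) = z at *
        rw [show 5 / 3 * (1 / z) - 5 / 3 * (1 / (z + 3 / 5)) = 1 / (z * (z + 3 / 5)) by
          field_simp; ring]
        exact one_div_le_one_div_of_le (by positivity) (by nlinarith)
    _ = 5 / 3 * (1 / y n) - 5 / 3 * (1 / y 0) :=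
        Finset.sum_range_sub (fun j => 5 / 3 * (1 / y j)) n
    _ ≤ _ := by
        have h1 := hy n le_rfl
        have h0 := hy 0 (Nat.zero_le _)
        have e1 : y n = 2 / 5 * n - 7 / 10 := by simp only [y]; ring
        have e0 : y 0 = n - 7 / 10 := by simp [y]
        rw [e1] at h1 ⊢
        rw [e0] at h0 ⊢
        have e : 5 / 3 * (1 / (2 / 5 * (n : ℝ) - 7 / 10)) - 5 / 3 * (1 / ((n : ℝ) - 7 / 10)) =
            n / ((2 / 5 * (n : ℝ) - 7 / 10) * (n - 7 / 10)) := by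
          rw [← mul_sub, div_sub_div _ _ h1.ne' h0.ne', mul_div_assoc']
          congr 1
          ring
        rw [e, div_le_div_iff₀ (by positivity) (by positivity)]
        nlinarith

theorem integral_exp_int_mul_I (m : ℤ) :
    ∫ t in (-Real.pi)..Real.pi, Complex.exp (m * Complex.I * t) =
      if m = 0 then (2 * Real.pi : ℂ) else 0 := by
  split_ifs with h
  · simp only [h, Int.cast_zero, zero_mul, Complex.exp_zero, intervalIntegral.integral_const,
      sub_neg_eq_add, Complex.real_smul, mul_one]
    push_cast
    ring
  · have hm : (m : ℂ) * Complex.I ≠ 0 := mul_ne_zero (by exact_mod_cast h) Complex.I_ne_zero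
    rw [integral_exp_mul_complex hm, div_eq_zero_iff]
    left
    rw [sub_eq_zero, Complex.exp_eq_exp_iff_exists_int]
    refine ⟨m, ?_⟩
    push_cast
    ring

/-- Fourier inversion for the binomial distribution. -/
theorem integral_exp_mul_bernoulliChar_pow (p : ℝ) {n k : ℕ} (hk : k ≤ n) :
    ∫ t in (-Real.pi)..Real.pi,
        Complex.exp (-((k - n * p) * t : ℝ) * Complex.I) * bernoulliChar p t ^ n =
      ((2 * Real.pi * (n.choose k * p ^ k * (1 - p) ^ (n - k)) : ℝ) : ℂ) := by
  have h : ∀ t : ℝ, Complex.exp (-((k - n * p) * t : ℝ) * Complex.I) * bernoulliChar p t ^ n =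
      ∑ j ∈ Finset.range (n + 1), ((n.choose j * p ^ j * (1 - p) ^ (n - j) : ℝ) : ℂ) *
        Complex.exp (((j - k : ℤ) : ℂ) * Complex.I * t) := by
    intro t
    rw [bernoulliChar_eq, mul_pow, ← Complex.exp_nat_mul, ← mul_assoc, ← Complex.exp_add,
      add_comm ((1 - p : ℝ) : ℂ), add_pow, Finset.mul_sum]
    refine Finset.sum_congr rfl fun j _ => ?_
    rw [mul_pow, ← Complex.exp_nat_mul]
    have : Complex.exp (((j - k : ℤ) : ℂ) * Complex.I * t) =
        Complex.exp (-((k - n * p) * t : ℝ) * Complex.I + n * ((-(p * t) : ℝ) * Complex.I)) *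
          Complex.exp (j * (t * Complex.I)) := by
      rw [← Complex.exp_add]
      congr 1
      push_cast
      ring
    rw [this]
    push_cast
    ring
  simp_rw [h]
  rw [intervalIntegral.integral_finsetSum
    fun j _ => Continuous.intervalIntegrable (by fun_prop) _ _]
  simp_rw [intervalIntegral.integral_const_mul, integral_exp_int_mul_I]
  rw [Finset.sum_eq_single k]
  · simp
    ring
  · intro j _ hj
    rw [if_neg (by rw [sub_eq_zero]; exact_mod_cast hj), mul_zero]
  · intro hk'
    exact absurd (Finset.mem_range.2 (Nat.lt_succ_of_le hk)) hk'

/-- Fourier inversion for the centred Gaussian with variance `s`. -/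
theorem integral_exp_mul_gaussian (x : ℝ) {s : ℝ} (hs : 0 < s) :
    ∫ t : ℝ, Complex.exp (-(x * t : ℝ) * Complex.I) * (Real.exp (-(s * t ^ 2 / 2)) : ℝ) =
      ((2 * Real.pi * (1 / Real.sqrt s * phi (x / Real.sqrt s)) : ℝ) : ℂ) := by
  have hs2 : (0 : ℝ) < ((s / 2 : ℝ) : ℂ).re := by
    rw [Complex.ofReal_re]
    positivity
  have h := fourierIntegral_gaussian hs2 (-x : ℂ)
  have hpi := Real.pi_pos
  have hsq : 2 * Real.pi * (1 / Real.sqrt s * phi (x / Real.sqrt s)) =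
      (Real.pi / (s / 2)) ^ (1 / 2 : ℝ) * Real.exp (-(-x) ^ 2 / (4 * (s / 2))) := by
    rw [phi, ← Real.sqrt_eq_rpow, div_pow, Real.sq_sqrt hs.le,
      show Real.pi / (s / 2) = 2 * Real.pi / s by field_simp, Real.sqrt_div (by positivity)]
    have h2 := Real.mul_self_sqrt (show 0 ≤ 2 * Real.pi by positivity)
    have hne : Real.sqrt (2 * Real.pi) ≠ 0 := by positivity
    have hne' : Real.sqrt s ≠ 0 := by positivity
    rw [show -(-x) ^ 2 / (4 * (s / 2)) = -x ^ 2 / (2 * s) by ring,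
      show -(x ^ 2 / s) / 2 = -x ^ 2 / (2 * s) by field_simp]
    nth_rewrite 1 [← h2]
    field_simp
  rw [hsq]
  push_cast [Complex.ofReal_cpow (show 0 ≤ Real.pi / (s / 2) by positivity)]
  push_cast at h
  rw [← h]
  refine MeasureTheory.integral_congr_ae (Filter.Eventually.of_forall fun t => ?_)
  simp only
  congr 2 <;> ring

theorem integrable_abs_pow_three_mul_exp {a : ℝ} (ha : 0 < a) :
    MeasureTheory.Integrable fun t : ℝ => |t| ^ 3 * Real.exp (-(a * t ^ 2 / 2)) := by
  have h := (integrable_rpow_mul_exp_neg_mul_sq (half_pos ha) (s := 3) (by norm_num)).norm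
  refine h.congr (Filter.Eventually.of_forall fun t => ?_)
  have : t ^ (3 : ℝ) = t ^ 3 := by exact_mod_cast Real.rpow_natCast t 3
  simp only [this, norm_mul, norm_pow, Real.norm_eq_abs, Real.abs_exp]
  congr 2
  ring

theorem integral_abs_pow_three_mul_exp {a : ℝ} (ha : 0 < a) :
    ∫ t : ℝ, |t| ^ 3 * Real.exp (-(a * t ^ 2 / 2)) = 4 / a ^ 2 := by
  have h := integral_comp_abs (f := fun t : ℝ => t ^ 3 * Real.exp (-(a * t ^ 2 / 2)))
  simp only [sq_abs] at h
  rw [h]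
  have h2 := integral_rpow_mul_exp_neg_mul_rpow (p := 2) (q := 3) (b := a / 2) (by norm_num)
    (by norm_num) (half_pos ha)
  have e : ∀ t : ℝ, t ^ (3 : ℝ) * Real.exp (-(a / 2) * t ^ (2 : ℝ)) =
      t ^ 3 * Real.exp (-(a * t ^ 2 / 2)) := by
    intro t
    have e3 : t ^ (3 : ℝ) = t ^ 3 := by exact_mod_cast Real.rpow_natCast t 3
    rw [e3, Real.rpow_two]
    congr 2
    ring
  simp_rw [e] at h2
  rw [h2, show (-(3 + 1) / 2 : ℝ) = -(2 : ℕ) by norm_num, show ((3 + 1) / 2 : ℝ) = 2 by norm_num,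
    Real.Gamma_two, Real.rpow_neg (by positivity), Real.rpow_natCast]
  field_simp
  norm_num

theorem norm_bernoulliChar_pow_sub_le {p t : ℝ} (hp0 : 0 ≤ p) (hp1 : p ≤ 1)
    (ht : |t| ≤ Real.pi) (n : ℕ) :
    ‖bernoulliChar p t ^ n - (Real.exp (-(n * (p * (1 - p)) * t ^ 2 / 2)) : ℝ)‖ ≤
      ∑ j ∈ Finset.range n, 0.182 * (p * (1 - p)) *
        (|t| ^ 3 * Real.exp (-(p * (1 - p) * (n - 1 - 3 / 5 * j) * t ^ 2 / 2))) := by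
  have h := norm_pow_sub_pow_le (bernoulliChar p t)
    ((Real.exp (-(p * (1 - p) * t ^ 2 / 2)) : ℝ) : ℂ) (norm_bernoulliChar_le hp0 hp1 ht)
    (b := Real.exp (-(p * (1 - p) * t ^ 2 / 2)))
    (by rw [Complex.norm_real, Real.norm_of_nonneg (Real.exp_pos _).le]) n
  rw [← Complex.ofReal_pow, ← Real.exp_nat_mul, show (n : ℝ) * -(p * (1 - p) * t ^ 2 / 2) =
    -(n * (p * (1 - p)) * t ^ 2 / 2) by ring] at h
  refine h.trans ?_
  rw [← Finset.mul_sum, ← Finset.mul_sum, ← mul_assoc]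
  refine mul_le_mul (norm_bernoulliChar_sub_le hp0 hp1 ht) (Finset.sum_le_sum fun j hj => ?_)
    (Finset.sum_nonneg fun j _ => by positivity)
    (mul_nonneg (mul_nonneg (by norm_num) (mul_nonneg hp0 (by linarith))) (by positivity))
  rw [← Real.exp_nat_mul, ← Real.exp_nat_mul, ← Real.exp_add]
  have hj := Finset.mem_range.1 hj
  rw [show n - 1 - j = n - (j + 1) by omega, Nat.cast_sub (by omega)]
  refine le_of_eq (congrArg _ ?_)
  push_cast
  ring

/-- Fourier-analytic local limit bound with remainder of order `1 / σ²`. -/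
theorem abs_binomial_sub_gaussian_le {p : ℝ} (hp0 : 0 < p) (hp1 : p < 1) {n k : ℕ} (hn : 6 ≤ n)
    (hk : k ≤ n) :
    2 * Real.pi * |(n.choose k : ℝ) * p ^ k * (1 - p) ^ (n - k) -
        (1 / Real.sqrt (n * p * (1 - p))) *
          phi (((k : ℝ) - n * p) / Real.sqrt (n * p * (1 - p)))| ≤
      3.0576 / (n * p * (1 - p)) + 4 / 30 / (n * p * (1 - p)) ^ 2 := by
  have hpi := Real.pi_pos
  have hq0 : 0 < 1 - p := by linarith
  have hn' : (6 : ℝ) ≤ n := by exact_mod_cast hn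
  have hu : 0 < p * (1 - p) := mul_pos hp0 hq0
  have hs : 0 < n * p * (1 - p) := by positivity
  set s := n * p * (1 - p) with hs_def
  set x := (k : ℝ) - n * p with hx_def
  have hxj : ∀ j ∈ Finset.range n, 0 < p * (1 - p) * (n - 1 - 3 / 5 * j) := by
    intro j hj
    have : (j : ℝ) + 1 ≤ n := by exact_mod_cast Finset.mem_range.1 hj
    refine mul_pos hu ?_
    linarith
  let B : ℝ → ℝ := fun t =>
    ∑ j ∈ Finset.range n, 0.182 * (p * (1 - p)) *
        (|t| ^ 3 * Real.exp (-(p * (1 - p) * (n - 1 - 3 / 5 * j) * t ^ 2 / 2))) +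
      1 / 30 * (|t| ^ 3 * Real.exp (-(s * t ^ 2 / 2)))
  have hBi : MeasureTheory.Integrable B :=
    (MeasureTheory.integrable_finsetSum _ fun j hj =>
      (integrable_abs_pow_three_mul_exp (hxj j hj)).const_mul _).add
      ((integrable_abs_pow_three_mul_exp hs).const_mul _)
  have hB : ∫ t, B t ≤ 3.0576 / s + 4 / 30 / s ^ 2 := by
    simp only [B]
    rw [MeasureTheory.integral_add (MeasureTheory.integrable_finsetSum _ fun j hj =>
      (integrable_abs_pow_three_mul_exp (hxj j hj)).const_mul _)
      ((integrable_abs_pow_three_mul_exp hs).const_mul _),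
      MeasureTheory.integral_finsetSum _ fun j hj =>
      (integrable_abs_pow_three_mul_exp (hxj j hj)).const_mul _,
      MeasureTheory.integral_const_mul, integral_abs_pow_three_mul_exp hs]
    have h1 : ∑ j ∈ Finset.range n, ∫ t : ℝ, 0.182 * (p * (1 - p)) *
        (|t| ^ 3 * Real.exp (-(p * (1 - p) * (n - 1 - 3 / 5 * j) * t ^ 2 / 2))) =
        0.728 / (p * (1 - p)) * ∑ j ∈ Finset.range n, 1 / ((n : ℝ) - 1 - 3 / 5 * j) ^ 2 := by
      rw [Finset.mul_sum]
      refine Finset.sum_congr rfl fun j hj => ?_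
      have h0 := hxj j hj
      rw [MeasureTheory.integral_const_mul, integral_abs_pow_three_mul_exp h0]
      have h0' : (n : ℝ) - 1 - 3 / 5 * j ≠ 0 := (pos_of_mul_pos_right h0 hu.le).ne'
      generalize (n : ℝ) - 1 - 3 / 5 * j = z at *
      field_simp
      norm_num
    rw [h1]
    have h2 := mul_le_mul_of_nonneg_left (sum_inv_sq_le hn)
      (show 0 ≤ 0.728 / (p * (1 - p)) by positivity)
    have e1 : 0.728 / (p * (1 - p)) * (21 / (5 * n)) = 3.0576 / s := by
      rw [hs_def]
      field_simp
      norm_num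
    have e2 : 1 / 30 * (4 / s ^ 2) = 4 / 30 / s ^ 2 := by ring
    linarith
  have hfc : Continuous fun t : ℝ =>
      Complex.exp (-(x * t : ℝ) * Complex.I) * bernoulliChar p t ^ n := by
    unfold bernoulliChar
    fun_prop
  have hIf : MeasureTheory.Integrable ((Set.Ioc (-Real.pi) Real.pi).indicator fun t : ℝ =>
      Complex.exp (-(x * t : ℝ) * Complex.I) * bernoulliChar p t ^ n) := by
    rw [MeasureTheory.integrable_indicator_iff measurableSet_Ioc]
    exact (hfc.intervalIntegrable (-Real.pi) Real.pi).1
  have hIg : MeasureTheory.Integrable fun t : ℝ =>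
      Complex.exp (-(x * t : ℝ) * Complex.I) * (Real.exp (-(s * t ^ 2 / 2)) : ℝ) := by
    refine (integrable_exp_neg_mul_sq (half_pos hs)).mono'
      (Continuous.aestronglyMeasurable (by fun_prop)) (Filter.Eventually.of_forall fun t => ?_)
    rw [norm_mul, ← Complex.ofReal_neg, Complex.norm_exp_ofReal_mul_I, one_mul, Complex.norm_real,
      Real.norm_of_nonneg (Real.exp_pos _).le]
    refine le_of_eq (congrArg _ ?_)
    ring
  have hbound : ∀ t : ℝ, ‖(Set.Ioc (-Real.pi) Real.pi).indicator (fun t : ℝ =>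
      Complex.exp (-(x * t : ℝ) * Complex.I) * bernoulliChar p t ^ n) t -
      Complex.exp (-(x * t : ℝ) * Complex.I) * (Real.exp (-(s * t ^ 2 / 2)) : ℝ)‖ ≤ B t := by
    intro t
    by_cases ht : t ∈ Set.Ioc (-Real.pi) Real.pi
    · rw [Set.indicator_of_mem ht, ← mul_sub, norm_mul, ← Complex.ofReal_neg,
        Complex.norm_exp_ofReal_mul_I, one_mul, hs_def, mul_assoc (n : ℝ)]
      refine (norm_bernoulliChar_pow_sub_le hp0.le hp1.le (abs_le.2 ⟨ht.1.le, ht.2⟩) n).trans ?_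
      exact le_add_of_nonneg_right (by positivity)
    · rw [Set.indicator_of_notMem ht, zero_sub, norm_neg, norm_mul, ← Complex.ofReal_neg,
        Complex.norm_exp_ofReal_mul_I, one_mul, Complex.norm_real,
        Real.norm_of_nonneg (Real.exp_pos _).le]
      have ht' : Real.pi ≤ |t| := by
        by_contra! hlt
        exact ht ⟨(abs_lt.1 hlt).1, (abs_lt.1 hlt).2.le⟩
      have h3 : 30 ≤ |t| ^ 3 := by
        refine le_trans ?_ (pow_le_pow_left₀ (by norm_num) (Real.pi_gt_d2.le.trans ht') 3)
        norm_num
      have hsum : 0 ≤ ∑ j ∈ Finset.range n, 0.182 * (p * (1 - p)) *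
          (|t| ^ 3 * Real.exp (-(p * (1 - p) * (n - 1 - 3 / 5 * j) * t ^ 2 / 2))) :=
        Finset.sum_nonneg fun j _ => by positivity
      simp only [B]
      nlinarith [mul_le_mul_of_nonneg_right h3 (Real.exp_pos (-(s * t ^ 2 / 2))).le]
  have hmain := (MeasureTheory.norm_integral_le_of_norm_le hBi
    (Filter.Eventually.of_forall hbound)).trans hB
  rw [MeasureTheory.integral_sub hIf hIg, MeasureTheory.integral_indicator measurableSet_Ioc,
    ← intervalIntegral.integral_of_le (by linarith), integral_exp_mul_bernoulliChar_pow p hk,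
    integral_exp_mul_gaussian x hs, ← Complex.ofReal_sub, Complex.norm_real, ← mul_sub, norm_mul,
    Real.norm_eq_abs, Real.norm_eq_abs, abs_of_pos (by positivity)] at hmain
  exact hmain

/-- Local Moivre–Laplace bound: for `0 < p < 1`, `q = 1 − p`, `n ≥ 1`,
`0 ≤ k ≤ n`, `σ = √(npq)`, the quantity
`δ_n(k,p) = C(n,k) p^k q^{n−k} − (1/σ) φ((k − np)/σ)` satisfies
`|δ_n(k,p)| < min{ 1/(σ√(2e)), 0.516/σ² }`. -/
theorem local_moivre_laplace_bound (p : ℝ) (hp : p ∈ Set.Ioo (0 : ℝ) 1)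
    (n k : ℕ) (hn : 1 ≤ n) (hk : k ≤ n) :
    |(n.choose k : ℝ) * p ^ k * (1 - p) ^ (n - k) -
        (1 / Real.sqrt (n * p * (1 - p))) *
          phi (((k : ℝ) - n * p) / Real.sqrt (n * p * (1 - p)))| <
      min (1 / (Real.sqrt (n * p * (1 - p)) * Real.sqrt (2 * Real.exp 1)))
        (0.516 / (n * p * (1 - p))) := by
  obtain ⟨hp0, hp1⟩ := hp
  have hpi := Real.pi_pos
  have hq0 : 0 < 1 - p := by linarith
  have hn' : (1 : ℝ) ≤ n := by exact_mod_cast hn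
  have hs : 0 < n * p * (1 - p) := by positivity
  have hfirst : |(n.choose k : ℝ) * p ^ k * (1 - p) ^ (n - k) -
        (1 / Real.sqrt (n * p * (1 - p))) *
          phi (((k : ℝ) - n * p) / Real.sqrt (n * p * (1 - p)))| <
      1 / (Real.sqrt (n * p * (1 - p)) * Real.sqrt (2 * Real.exp 1)) := by
    have hP : (n.choose k : ℝ) * p ^ k * (1 - p) ^ (n - k) <
        1 / (Real.sqrt (n * p * (1 - p)) * Real.sqrt (2 * Real.exp 1)) := by
      obtain ⟨m, rfl⟩ := Nat.exists_eq_add_of_le hk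
      have h := binomial_sq_mul_lt hp0 hp1 hn
      rw [← Real.sqrt_mul hs.le, one_div, ← Real.sqrt_inv, ← one_div]
      refine Real.lt_sqrt_of_sq_lt ?_
      rw [← div_div, div_right_comm, lt_div_iff₀ hs, Nat.add_sub_cancel_left]
      exact h
    have hG : (1 / Real.sqrt (n * p * (1 - p))) *
          phi (((k : ℝ) - n * p) / Real.sqrt (n * p * (1 - p))) <
        1 / (Real.sqrt (n * p * (1 - p)) * Real.sqrt (2 * Real.exp 1)) := by
      rw [← one_div_mul_one_div]
      refine mul_lt_mul_of_pos_left ?_ (by positivity)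
      have hlt : Real.sqrt (2 * Real.exp 1) < Real.sqrt (2 * Real.pi) :=
        Real.sqrt_lt_sqrt (by positivity)
          (by linarith [Real.exp_one_lt_d9, Real.pi_gt_d2])
      have he : 0 < Real.sqrt (2 * Real.exp 1) := by positivity
      refine lt_of_le_of_lt ?_ (one_div_lt_one_div_of_lt he hlt)
      rw [phi, one_div]
      refine mul_le_of_le_one_right (by positivity) (Real.exp_le_one_iff.2 ?_)
      have := sq_nonneg (((k : ℝ) - n * p) / Real.sqrt (n * p * (1 - p)))
      linarith
    have hP0 : 0 ≤ (n.choose k : ℝ) * p ^ k * (1 - p) ^ (n - k) := by positivity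
    have hG0 : 0 ≤ (1 / Real.sqrt (n * p * (1 - p))) *
        phi (((k : ℝ) - n * p) / Real.sqrt (n * p * (1 - p))) := by
      unfold phi
      positivity
    rw [abs_lt]
    constructor <;> linarith
  refine lt_min hfirst ?_
  rcases le_total (n * p * (1 - p)) 1.44 with hle | hge
  · refine hfirst.trans_le ?_
    set s := n * p * (1 - p)
    rw [← Real.sqrt_mul hs.le, div_le_div_iff₀ (by positivity) hs, one_mul]
    have h1 : s ≤ Real.sqrt ((0.516 * 0.516) * (s * (2 * Real.exp 1))) := by
      refine Real.le_sqrt_of_sq_le ?_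
      have := Real.exp_one_gt_d9
      nlinarith
    rwa [Real.sqrt_mul (by norm_num), Real.sqrt_mul_self (by norm_num)] at h1
  · have h4 : p * (1 - p) ≤ 1 / 4 := by nlinarith [sq_nonneg (p - 1 / 2)]
    have hn6 : 6 ≤ n := by
      by_contra! hlt
      have : (n : ℝ) ≤ 5 := by exact_mod_cast Nat.le_of_lt_succ hlt
      have := mul_le_mul this h4 (by positivity) (by norm_num)
      linarith
    have h := abs_binomial_sub_gaussian_le hp0 hp1 hn6 hk
    set s := n * p * (1 - p)
    have h5 : 4 / 30 / s ^ 2 ≤ 0.1 / s := by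
      rw [div_le_div_iff₀ (by positivity) hs]
      nlinarith
    have h6 : 3.0576 / s + 0.1 / s < 6.28 * (0.516 / s) := by
      rw [← add_div, mul_div_assoc', div_lt_div_iff_of_pos_right hs]
      norm_num
    have h7 := h.trans_lt ((add_le_add_right h5 _).trans_lt h6)
    by_contra! hcon
    have h8 : 6.28 * (0.516 / s) ≤ 2 * Real.pi * |(n.choose k : ℝ) * p ^ k * (1 - p) ^ (n - k) -
        (1 / Real.sqrt s) * phi (((k : ℝ) - n * p) / Real.sqrt s)| := by
      refine mul_le_mul ?_ hcon (by positivity) (by positivity)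
      linarith [Real.pi_gt_d2]
    linarith
end
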